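/- Let (X, μ) be a probability space equipped with an ergodic measure-preserving ℤ²-action, and let A ⊆ X be a measurable subset such that Ann(1_A) ≠ {0}. Then there exists a finite index subgroup Λ ⊆ ℤ² such that for each Λ-ergodic component X_s ⊆ X, either X_s ∩ A is 1-periodic or μ(X_s ∩ A) = μ(X_s)/2. -/

import Mathlib

open MeasureTheory

/-- The action of a Laurent polynomial `p = Σ c_g u^g ∈ ℤ[u₁^±, u₂^±]` on a function
`f : X → ℝ`, relative to a `ℤ²`-action `T` on `X` : `(p · f)(x) = Σ c_g f(g⁻¹ · x)`. -/
noncomputable def polyAct {X : Type*} (T : ℤ × ℤ → X → X)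
    (p : AddMonoidAlgebra ℤ (ℤ × ℤ)) (f : X → ℝ) : X → ℝ :=
  fun x => Finsupp.sum p.coeff fun g c => (c : ℝ) * f (T (-g) x)

/-- `Xs` is the family of `Λ`-ergodic components of `(X, μ)` for the `ℤ²`-action `T`. -/
def IsErgodicComponents {X : Type*} [MeasurableSpace X] (μ : Measure X)
    (T : ℤ × ℤ → X → X) (Λ : AddSubgroup (ℤ × ℤ)) {n : ℕ} (Xs : Fin n → Set X) : Prop :=
  (∀ i, MeasurableSet (Xs i)) ∧
  (∀ i, 0 < μ (Xs i)) ∧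
  (∀ i j, i ≠ j → μ (Xs i ∩ Xs j) = 0) ∧
  μ (Set.univ \ ⋃ i, Xs i) = 0 ∧
  (∀ i, ∀ g ∈ Λ, T g ⁻¹' Xs i =ᵐ[μ] Xs i) ∧
  (∀ i, ∀ S : Set X, MeasurableSet S → (∀ g ∈ Λ, T g ⁻¹' S =ᵐ[μ] S) →
    μ (Xs i ∩ S) = 0 ∨ μ (Xs i \ S) = 0)

def SPoly {G : Type*} [AddCommGroup G] : ℕ → (ℤ → G) → Prop
  | 0, a => ∀ n, a n = 0
  | m + 1, a => ∀ h : ℤ, SPoly m (fun n => a (n + h) - a n)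

def SPer {G : Type*} (a : ℤ → G) : Prop := ∃ k : ℤ, 0 < k ∧ ∀ n, a (n + k) = a n

section Seq
variable {G : Type*} [AddCommGroup G]

lemma arith_prog {a : ℤ → G} {p : ℤ} {d : G} (h : ∀ n, a (n + p) = a n + d) (n j : ℤ) :
    a (n + p * j) = a n + j • d := by
  induction j using Int.induction_on with
  | zero => simp
  | succ i ih =>
    rw [mul_add, mul_one, ← add_assoc, h, ih, add_smul, one_smul, add_assoc]
  | pred i ih =>
    have := h (n + p * (-i - 1))
    rw [show n + p * (-i - 1) + p = n + p * (-i) by ring, ih] at this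
    rw [sub_smul, one_smul, ← add_sub_assoc, this]; abel

lemma per_mul {G : Type*} {a : ℤ → G} {k : ℤ} (h : ∀ n, a (n + k) = a n) (n j : ℤ) :
    a (n + k * j) = a n := by
  induction j using Int.induction_on with
  | zero => simp
  | succ i ih => rw [mul_add, mul_one, ← add_assoc, h, ih]
  | pred i ih =>
    have := h (n + k * (-i - 1))
    rw [show n + k * (-i - 1) + k = n + k * (-i) by ring, ih] at this
    exact this.symm

lemma per_of_torsion {a : ℤ → G} {p : ℤ} {d : G} (hp : 0 < p) (h : ∀ n, a (n + p) = a n + d)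
    {N : ℤ} (hN : N ≠ 0) (hd : N • d = 0) : SPer a := by
  refine ⟨p * |N|, by positivity, fun n => ?_⟩
  rw [arith_prog h]
  have : |N| • d = 0 := by
    rcases abs_choice N with h | h <;> rw [h] <;> simp [hd]
  rw [this, add_zero]

lemma exists_step {a : ℤ → G} (h : SPer (fun n => a (n + 1) - a n)) :
    ∃ p : ℤ, 0 < p ∧ ∃ d : G, ∀ n, a (n + p) = a n + d := by
  obtain ⟨p, hp, hper⟩ := h
  refine ⟨p, hp, a p - a 0, fun n => ?_⟩
  have h1 : ∀ n, (fun n => a (n + p) - a n) (n + 1) = (fun n => a (n + p) - a n) n := by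
    intro n
    have := hper n
    simp only at this ⊢
    rw [show n + p + 1 = n + 1 + p by ring] at this
    rw [sub_eq_sub_iff_add_eq_add] at this ⊢
    rw [this, add_comm]
  have h2 := per_mul (a := fun n => a (n + p) - a n) h1 0 n
  simp only [zero_add, one_mul] at h2
  rw [← h2]; abel

lemma spoly_succ : ∀ {m : ℕ} {a : ℤ → G}, SPoly m a → SPoly (m + 1) a
  | 0, a, h => fun k n => by simp [h _]
  | m + 1, a, h => fun k => spoly_succ (h k)

lemma spoly_shift : ∀ {m : ℕ} {a : ℤ → G} (s : ℤ), SPoly m a → SPoly m (fun n => a (n + s))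
  | 0, a, s, h => fun n => h _
  | m + 1, a, s, h => fun k => by
    have := spoly_shift s (h k)
    simpa only [add_right_comm _ k s] using this

lemma spoly_scale : ∀ {m : ℕ} {a : ℤ → G} (k t : ℤ), SPoly m a → SPoly m (fun n => k • a (t * n))
  | 0, a, k, t, h => fun n => by simp [h _]
  | m + 1, a, k, t, h => fun s => by
    have := spoly_scale k t (h (t * s))
    simpa only [smul_sub, mul_add] using this

lemma per_diff : ∀ {m : ℕ} {a : ℤ → G} (_ : SPoly m a) {h : ℤ} (_ : h ≠ 0)
    (_ : SPer (fun n => a (n + h) - a n)), SPer (fun n => a (n + 1) - a n)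
  | 0, a, ha, h, _, _ => ⟨1, one_pos, fun n => by simp [ha _]⟩
  | m + 1, a, ha, h, hh, hp => by
    have h1 : SPer (fun n => (fun n => a (n + 1) - a n) (n + h) - (fun n => a (n + 1) - a n) n) := by
      obtain ⟨k, hk, hper⟩ := hp
      refine ⟨k, hk, fun n => ?_⟩
      have e1 := hper n
      have e2 := hper (n + 1)
      simp only at e1 e2 ⊢
      have : ∀ n, a (n + h + 1) - a (n + h) - (a (n + 1) - a n)
        = (a (n + 1 + h) - a (n + 1)) - (a (n + h) - a n) := by
        intro n; rw [add_right_comm n h 1]; abel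
      rw [this, this, ← e1, ← e2, add_right_comm n k 1]
    have h2 := per_diff (ha 1) hh h1
    obtain ⟨p, hp0, d, hd⟩ := exists_step (a := fun n => a (n + 1) - a n) h2
    obtain ⟨q, hq0, hq⟩ := hp
    have h3 : ∀ n : ℤ, ∀ s : ℤ, a (n + s + p) - a (n + s) = a (n + p) - a n + s • d := by
      intro n s
      have h4 : ∀ s, (fun s => a (n + s + p) - a (n + s)) (s + 1)
          = (fun s => a (n + s + p) - a (n + s)) s + d := by
        intro s
        have := hd (n + s)
        simp only at this ⊢
        rw [show n + (s + 1) + p = n + s + p + 1 by ring, show n + (s + 1) = n + s + 1 by ring]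
        have e : a (n + s + p + 1) = (a (n + s + p + 1) - a (n + s + p)) + a (n + s + p) := by abel
        rw [e, this]; abel
      have := arith_prog (a := fun s => a (n + s + p) - a (n + s)) h4 0 s
      simpa using this
    have h5 : ∀ n, (fun n => a (n + h) - a n) (n + p) = (fun n => a (n + h) - a n) n + h • d := by
      intro n
      have := h3 n h
      simp only
      rw [show n + p + h = n + h + p by ring]
      rw [sub_eq_iff_eq_add] at this
      rw [this]; abel
    have h6 := arith_prog (a := fun n => a (n + h) - a n) h5 0 q
    have h7 := per_mul (a := fun n => a (n + h) - a n) hq 0 p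
    rw [mul_comm q p, h6, add_eq_left, smul_smul] at h7
    exact per_of_torsion (a := fun n => a (n + 1) - a n) hp0 hd (mul_ne_zero hq0.ne' hh) h7

lemma per_scale : ∀ {m : ℕ} {a : ℤ → G} (_ : SPoly m a) {k t : ℤ} (_ : k ≠ 0) (_ : t ≠ 0)
    (_ : SPer (fun n => k • a (t * n))), SPer a
  | 0, a, ha, k, t, _, _, _ => ⟨1, one_pos, fun n => by simp [ha _]⟩
  | m + 1, a, ha, k, t, hk, ht, hp => by
    have h1 : SPer (fun n => k • (fun n => a (n + t) - a n) (t * n)) := by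
      obtain ⟨q, hq, hper⟩ := hp
      refine ⟨q, hq, fun n => ?_⟩
      have e1 := hper n
      have e2 := hper (n + 1)
      simp only [smul_sub] at e1 e2 ⊢
      rw [e1, show t * (n + q) + t = t * (n + 1 + q) by ring, e2,
        show t * n + t = t * (n + 1) by ring]
    have h2 := per_diff ha ht (per_scale (ha t) hk ht h1)
    obtain ⟨p, hp0, d, hd⟩ := exists_step h2
    obtain ⟨q, hq0, hq⟩ := hp
    have h7 := per_mul (a := fun n => k • a (t * n)) hq 0 p
    rw [show t * (0 + q * p) = 0 + p * (t * q) by ring, arith_prog hd, mul_zero, smul_add,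
      add_eq_left, smul_smul] at h7
    exact per_of_torsion hp0 hd (by positivity) h7

end Seq

section Weyl
open Filter Topology Finset

lemma avg_shift_bound {z : ℕ → ℂ} (hz : ∀ n, ‖z n‖ ≤ 1) (N h : ℕ) :
    ‖∑ n ∈ range N, z (n + h) - ∑ n ∈ range N, z n‖ ≤ 2 * h := by
  have e : ∑ n ∈ range N, z (n + h) - ∑ n ∈ range N, z n
      = ∑ n ∈ range h, z (N + n) - ∑ n ∈ range h, z n := by
    have h1 := sum_range_add z N h
    have h2 := sum_range_add z h N
    rw [add_comm h N, h1] at h2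
    rw [sub_eq_sub_iff_add_eq_add, add_comm, add_comm (∑ n ∈ range h, z (N + n)), h2, add_comm]
    simp [add_comm]
  rw [e]
  have b : ∀ f : ℕ → ℂ, (∀ n, ‖f n‖ ≤ 1) → ‖∑ n ∈ range h, f n‖ ≤ h := fun f hf => by
    simpa using norm_sum_le_of_le (range h) (fun n _ => hf n)
  calc _ ≤ _ := norm_sub_le _ _
    _ ≤ h + h := add_le_add (b _ fun n => hz _) (b _ fun n => hz _)
    _ = _ := by ring

lemma vdc {z : ℕ → ℂ} (hz : ∀ n, ‖z n‖ ≤ 1)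
    (hc : ∀ h h' : ℕ, h ≠ h' → Tendsto (fun N : ℕ => (N : ℂ)⁻¹ *
      ∑ n ∈ range N, z (n + h) * (starRingEnd ℂ) (z (n + h'))) atTop (𝓝 0)) :
    Tendsto (fun N : ℕ => (N : ℂ)⁻¹ * ∑ n ∈ range N, z n) atTop (𝓝 0) := by
  rw [Metric.tendsto_atTop']
  intro ε hε
  obtain ⟨H, hH⟩ := exists_nat_gt (8 / ε ^ 2)
  have hH0 : (0 : ℝ) < H := lt_trans (by positivity) hH
  set S : ℕ → ℂ := fun n => ∑ h ∈ range H, z (n + h) with hS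
  have hD : Tendsto (fun N : ℕ => ∑ h ∈ range H, ∑ h' ∈ range H, if h = h' then (0 : ℂ) else
      (N : ℂ)⁻¹ * ∑ n ∈ range N, z (n + h) * (starRingEnd ℂ) (z (n + h'))) atTop (𝓝 0) := by
    have : (0 : ℂ) = ∑ h ∈ range H, ∑ h' ∈ range H, (0 : ℂ) := by simp
    rw [this]
    refine tendsto_finsetSum _ fun h _ => tendsto_finsetSum _ fun h' _ => ?_
    by_cases e : h = h'
    · simp [e]
    · simpa [e] using hc h h' e
  have hD' := (Metric.tendsto_atTop'.1 hD) H hH0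
  obtain ⟨N₁, hN₁⟩ := hD'
  obtain ⟨N₂, hN₂⟩ := exists_nat_gt (4 * H / ε)
  refine ⟨max N₁ N₂, fun N hN => ?_⟩
  have hNN : (4 * H / ε : ℝ) < N := hN₂.trans (by exact_mod_cast (le_max_right _ _).trans_lt hN)
  have hN0 : (0 : ℝ) < N := lt_of_le_of_lt (by positivity) hNN
  have hN0' : (N : ℂ) ≠ 0 := by exact_mod_cast hN0.ne'
  have hd := hN₁ N ((le_max_left _ _).trans_lt hN)
  rw [dist_zero_right] at hd ⊢
  have hsq : (∑ n ∈ range N, ‖S n‖ ^ 2 : ℝ) ≤ 2 * H * N := by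
    have e1 : ((∑ n ∈ range N, ‖S n‖ ^ 2 : ℝ) : ℂ) = ∑ h ∈ range H, ∑ h' ∈ range H,
        ∑ n ∈ range N, z (n + h) * (starRingEnd ℂ) (z (n + h')) := by
      push_cast
      simp_rw [← Complex.mul_conj', hS, map_sum, sum_mul_sum]
      rw [sum_comm]
      refine sum_congr rfl fun h _ => ?_
      rw [sum_comm]
    have e2 : ∑ h ∈ range H, ∑ h' ∈ range H,
        ∑ n ∈ range N, z (n + h) * (starRingEnd ℂ) (z (n + h')) =
        (∑ h ∈ range H, ∑ n ∈ range N, z (n + h) * (starRingEnd ℂ) (z (n + h))) +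
        N * ∑ h ∈ range H, ∑ h' ∈ range H, if h = h' then (0 : ℂ) else
      (N : ℂ)⁻¹ * ∑ n ∈ range N, z (n + h) * (starRingEnd ℂ) (z (n + h')) := by
      rw [mul_sum, ← sum_add_distrib]
      refine sum_congr rfl fun h hh => ?_
      rw [mul_sum]
      have : ∑ n ∈ range N, z (n + h) * (starRingEnd ℂ) (z (n + h)) =
        ∑ h' ∈ range H, if h = h' then ∑ n ∈ range N, z (n + h) * (starRingEnd ℂ) (z (n + h'))
          else 0 := by
        rw [sum_ite_eq]; simp [hh]
      rw [this, ← sum_add_distrib]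
      refine sum_congr rfl fun h' _ => ?_
      split_ifs
      · simp
      · rw [zero_add, mul_inv_cancel_left₀ hN0']
    have e3 : ‖((∑ n ∈ range N, ‖S n‖ ^ 2 : ℝ) : ℂ)‖ ≤ H * N + N * H := by
      rw [e1, e2]
      refine (norm_add_le _ _).trans (add_le_add ?_ ?_)
      · refine (norm_sum_le_of_le (range H) (f := fun h => ∑ n ∈ range N, z (n + h) *
          (starRingEnd ℂ) (z (n + h))) (n := fun _ => (N : ℝ)) fun h _ => ?_).trans (by simp)
        refine (norm_sum_le_of_le (range N) (n := fun _ => (1 : ℝ)) fun n _ => ?_).trans (by simp)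
        rw [norm_mul, RCLike.norm_conj]
        exact mul_le_one₀ (hz _) (norm_nonneg _) (hz _)
      · rw [norm_mul, Complex.norm_natCast]
        exact mul_le_mul_of_nonneg_left hd.le hN0.le
    rw [Complex.norm_real, Real.norm_of_nonneg (by positivity)] at e3
    linarith
  have hcs : (∑ n ∈ range N, ‖S n‖ : ℝ) ^ 2 ≤ N * (2 * H * N) := by
    have := sq_sum_le_card_mul_sum_sq (s := range N) (f := fun n => ‖S n‖)
    rw [card_range] at this
    exact this.trans (mul_le_mul_of_nonneg_left hsq hN0.le)
  have hSS : ‖∑ n ∈ range N, S n - H * ∑ n ∈ range N, z n‖ ≤ 2 * H * H := by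
    have e : ∑ n ∈ range N, S n - H * ∑ n ∈ range N, z n =
        ∑ h ∈ range H, (∑ n ∈ range N, z (n + h) - ∑ n ∈ range N, z n) := by
      rw [sum_sub_distrib, sum_const, card_range, nsmul_eq_mul, hS, sum_comm]
    rw [e]
    refine (norm_sum_le_of_le (range H) (n := fun _ => (2 * H : ℝ)) fun h hh => ?_).trans ?_
    · refine (avg_shift_bound hz N h).trans ?_
      have : (h : ℝ) ≤ H := by exact_mod_cast (mem_range.1 hh).le
      linarith
    · simp; linarith
  have hA : (∑ n ∈ range N, ‖S n‖ : ℝ) < ε / 2 * H * N := by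
    refine lt_of_pow_lt_pow_left₀ 2 (by positivity) (hcs.trans_lt ?_)
    have : 8 < ε ^ 2 * H := by
      rw [div_lt_iff₀ (by positivity)] at hH; linarith
    have h3 : 0 < (N : ℝ) * N * H := by positivity
    nlinarith
  have hB : H * ‖∑ n ∈ range N, z n‖ ≤ (∑ n ∈ range N, ‖S n‖ : ℝ) + 2 * H * H := by
    have h1 : (H : ℝ) * ‖∑ n ∈ range N, z n‖ = ‖(H : ℂ) * ∑ n ∈ range N, z n‖ := by
      rw [norm_mul, Complex.norm_natCast]
    rw [h1]
    have h2 := norm_sub_norm_le (H * ∑ n ∈ range N, z n) (∑ n ∈ range N, S n)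
    rw [norm_sub_rev] at h2
    have h3 := norm_sum_le (range N) S
    linarith
  rw [norm_mul, norm_inv, Complex.norm_natCast, inv_mul_lt_iff₀ hN0]
  have hC : (4 * H : ℝ) < ε * N := by
    rw [div_lt_iff₀ hε] at hNN; linarith
  have : H * ‖∑ n ∈ range N, z n‖ < H * (N * ε) := by nlinarith
  exact lt_of_mul_lt_mul_left this hH0.le

noncomputable def ee (x : UnitAddCircle) : ℂ := (AddCircle.toCircle x : ℂ)

lemma ee_add (x y) : ee (x + y) = ee x * ee y := by simp [ee, AddCircle.toCircle_add]
lemma norm_ee (x) : ‖ee x‖ = 1 := Circle.norm_coe _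
lemma ee_neg (x) : ee (-x) = (starRingEnd ℂ) (ee x) := by
  rw [ee, AddCircle.toCircle_neg, Circle.coe_inv_eq_conj, ee]
lemma ee_eq_one {x} (h : ee x = 1) : x = 0 := by
  apply AddCircle.injective_toCircle one_ne_zero
  rw [AddCircle.toCircle_zero]
  exact Circle.coe_eq_one.1 h

lemma weyl : ∀ {m : ℕ} {a : ℤ → UnitAddCircle} (_ : SPoly m a) (_ : ¬ SPer a),
    Tendsto (fun N : ℕ => (N : ℂ)⁻¹ * ∑ n ∈ range N, ee (a n)) atTop (𝓝 0)
  | 0, a, ha, hn => absurd ⟨1, one_pos, fun n => by simp [ha _]⟩ hn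
  | m + 1, a, ha, hn => by
    by_cases hp : SPer (fun n => a (n + 1) - a n)
    · obtain ⟨p, hp0, d, hd⟩ := exists_step hp
      lift p to ℕ using hp0.le
      have hc : ee d ≠ 1 := by
        intro h
        exact hn (per_of_torsion hp0 hd (N := 1) one_ne_zero (by simp [ee_eq_one h]))
      have hc' : 0 < ‖ee d - 1‖ := norm_pos_iff.2 (sub_ne_zero.2 hc)
      have hb : ∀ N : ℕ, ‖∑ n ∈ range N, ee (a n)‖ ≤ 2 * p / ‖ee d - 1‖ := by
        intro N
        have := avg_shift_bound (z := fun n : ℕ => ee (a n)) (fun n => (norm_ee _).le) N p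
        have e : ∑ n ∈ range N, ee (a ((n + p : ℕ) : ℤ)) - ∑ n ∈ range N, ee (a n)
          = (ee d - 1) * ∑ n ∈ range N, ee (a n) := by
          rw [sub_mul, one_mul, mul_sum]
          congr 1
          refine sum_congr rfl fun n _ => ?_
          rw [Nat.cast_add, hd, ee_add, mul_comm]
        rw [e, norm_mul] at this
        rw [le_div_iff₀ hc']; linarith
      rw [tendsto_zero_iff_norm_tendsto_zero]
      refine squeeze_zero (fun _ => norm_nonneg _) (g := fun N : ℕ => (N : ℝ)⁻¹ * (2 * p / ‖ee d - 1‖))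
        (fun N => ?_) ?_
      · rw [norm_mul, norm_inv, Complex.norm_natCast]
        exact mul_le_mul_of_nonneg_left (hb N) (by positivity)
      · simpa using (tendsto_inv_atTop_nhds_zero_nat (𝕜 := ℝ)).mul_const (2 * p / ‖ee d - 1‖)
    · refine vdc (fun n => (norm_ee _).le) fun h h' hh => ?_
      set b : ℤ → UnitAddCircle := fun n => a (n + h' + (h - h')) - a (n + h') with hb
      have hbp : SPoly m b := spoly_shift (h' : ℤ) (ha (h - h'))
      have hbn : ¬ SPer b := by
        rintro ⟨k, hk, hper⟩
        refine hp (per_diff ha (h := h - h') (sub_ne_zero.2 (by exact_mod_cast hh)) ⟨k, hk, fun n => ?_⟩)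
        have := hper (n - h')
        simp only [hb] at this
        rw [show n - h' + k + h' = n + k by ring, sub_add_cancel] at this
        exact this
      have := weyl hbp hbn
      refine this.congr fun N => ?_
      congr 1
      refine sum_congr rfl fun n _ => ?_
      simp only [hb]
      rw [sub_eq_add_neg, ee_add, ee_neg]
      congr 3
      · push_cast; ring_nf
end Weyl

section Dilation

def shiftHom (q : ℕ) : Multiplicative (ℤ × ℤ) →* Module.End ℤ (ℤ × ℤ → ℤ) where
  toFun g := LinearMap.funLeft ℤ ℤ (fun h => h - q • g.toAdd)
  map_one' := by ext; simp [LinearMap.funLeft]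
  map_mul' a b := by
    refine LinearMap.ext fun f => funext fun h => ?_
    simp only [LinearMap.funLeft_apply, Module.End.mul_apply, toAdd_mul, smul_add]
    congr 1; abel

noncomputable def actD (q : ℕ) : AddMonoidAlgebra ℤ (ℤ × ℤ) →ₐ[ℤ] Module.End ℤ (ℤ × ℤ → ℤ) :=
  AddMonoidAlgebra.lift ℤ _ (ℤ × ℤ) (shiftHom q)

lemma actD_apply (q : ℕ) (p : AddMonoidAlgebra ℤ (ℤ × ℤ)) (α : ℤ × ℤ → ℤ) (h : ℤ × ℤ) :
    actD q p α h = p.coeff.sum fun g c => c * α (h - q • g) := by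
  rw [actD, AddMonoidAlgebra.lift_apply, Finsupp.sum, Finsupp.sum, LinearMap.sum_apply,
    Finset.sum_apply]
  rfl

lemma dil_congr (ℓ : ℕ) (hℓ : ℓ.Prime) (q : ℕ) (p : AddMonoidAlgebra ℤ (ℤ × ℤ)) :
    ∃ r p' : AddMonoidAlgebra ℤ (ℤ × ℤ), p ^ ℓ = p' + (ℓ : AddMonoidAlgebra ℤ (ℤ × ℤ)) * r ∧
      actD q p' = actD (ℓ * q) p := by
  induction p using AddMonoidAlgebra.induction_linear with
  | zero => exact ⟨0, 0, by simp [hℓ.ne_zero], by simp⟩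
  | add f g hf hg =>
    obtain ⟨r, p', h1, h2⟩ := hf
    obtain ⟨s, q', h3, h4⟩ := hg
    obtain ⟨t, ht⟩ := exists_add_pow_prime_eq hℓ f g
    refine ⟨r + s + f * g * t, p' + q', ?_, by rw [map_add, map_add, h2, h4]⟩
    rw [ht, h1, h3]; ring
  | single g c =>
    have : (ℓ : ℤ) ∣ c ^ ℓ - c := by
      have := Fact.mk hℓ
      rw [← ZMod.intCast_zmod_eq_zero_iff_dvd]
      push_cast
      rw [ZMod.pow_card, sub_self]
    obtain ⟨k, hk⟩ := this
    refine ⟨AddMonoidAlgebra.single (ℓ • g) k, AddMonoidAlgebra.single (ℓ • g) c, ?_, ?_⟩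
    · rw [AddMonoidAlgebra.single_pow, sub_eq_iff_eq_add'.1 hk,
        ← nsmul_eq_mul (α := AddMonoidAlgebra ℤ (ℤ × ℤ)),
        AddMonoidAlgebra.smul_single, ← AddMonoidAlgebra.single_add, nsmul_eq_mul ℓ k]
    · rw [actD, actD, AddMonoidAlgebra.lift_single, AddMonoidAlgebra.lift_single]
      congr 1
      simp only [shiftHom, MonoidHom.coe_mk, OneHom.coe_mk, toAdd_ofAdd, smul_smul, mul_comm]

lemma dilation (p : AddMonoidAlgebra ℤ (ℤ × ℤ)) (α : ℤ × ℤ → ℤ) (hα : ∀ h, |α h| ≤ 1)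
    (h1 : actD 1 p α = 0) (q : ℕ) (hq0 : q ≠ 0)
    (hq : ∀ ℓ : ℕ, ℓ.Prime → ℓ ∣ q → (∑ g ∈ p.coeff.support, |p.coeff g|) < ℓ) :
    actD q p α = 0 := by
  induction q using induction_on_primes with
  | zero => exact absurd rfl hq0
  | one => exact h1
  | prime_mul ℓ q hℓ ih =>
    have hq' : q ≠ 0 := fun h => hq0 (by simp [h])
    have h2 := ih hq' (fun ℓ' hp hd => hq ℓ' hp (hd.mul_left _))
    obtain ⟨r, p', e1, e2⟩ := dil_congr ℓ hℓ q p
    have e3 : actD q (p ^ ℓ) α = 0 := by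
      obtain ⟨n, rfl⟩ := Nat.exists_eq_succ_of_ne_zero hℓ.ne_zero
      rw [pow_succ, map_mul, Module.End.mul_apply, h2, map_zero]
    rw [e1, map_add, map_mul, e2, map_natCast, LinearMap.add_apply, Module.End.mul_apply] at e3
    funext h
    have e4 := congrFun e3 h
    refine Int.eq_zero_of_abs_lt_dvd (m := ℓ) ?_ ?_
    · refine ⟨-(actD q r α h), ?_⟩
      simp only [Pi.add_apply, Module.End.natCast_apply, nsmul_eq_mul, Pi.mul_apply, Pi.natCast_apply, Pi.zero_apply] at e4
      linarith
    · refine lt_of_le_of_lt ?_ (hq ℓ hℓ (dvd_mul_right _ _))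
      rw [actD_apply]
      refine (Finset.abs_sum_le_sum_abs _ _).trans (Finset.sum_le_sum fun g _ => ?_)
      rw [abs_mul]
      exact mul_le_of_le_one_right (abs_nonneg _) (hα _)

lemma dilation_good (p : AddMonoidAlgebra ℤ (ℤ × ℤ)) :
    ∃ N : ℕ, 0 < N ∧ ∀ (α : ℤ × ℤ → ℤ) (_ : ∀ h, |α h| ≤ 1)
    (_ : ∀ h, (p.coeff.sum fun g c => c * α (h - g)) = 0) (k : ℕ) (h : ℤ × ℤ),
      (p.coeff.sum fun g c => c * α (h - (1 + k * N) • g)) = 0 := by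
  set C := (∑ g ∈ p.coeff.support, |p.coeff g|) with hC
  have hC0 : 0 ≤ C := Finset.sum_nonneg fun _ _ => abs_nonneg _
  refine ⟨C.toNat.factorial, Nat.factorial_pos _, fun α hα h1 k h => ?_⟩
  rw [← actD_apply]
  rw [dilation p α hα (funext fun h => by rw [actD_apply]; simpa using h1 h) _ (by positivity)]
  · rfl
  · intro ℓ hℓ hd
    by_contra hcon
    push Not at hcon
    have : ℓ ≤ C.toNat := by
      rw [← hC] at hcon; omega
    have h3 := (Nat.dvd_factorial hℓ.pos this)
    have h4 := (Nat.dvd_add_left (h3.mul_left k)).1 hd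
    exact hℓ.one_lt.ne' (Nat.dvd_one.1 h4)

end Dilation

section Proj
set_option linter.unusedSectionVars false
open Filter Topology
variable {X : Type*} [MeasurableSpace X] {μ : Measure X} [IsProbabilityMeasure μ]

noncomputable def koop (S : X → X) (hS : MeasurePreserving S μ μ) : Lp ℝ 2 μ →L[ℝ] Lp ℝ 2 μ :=
  (Lp.compMeasurePreservingₗᵢ ℝ S hS).toContinuousLinearMap

lemma koop_coe (S : X → X) (hS : MeasurePreserving S μ μ) (f : Lp ℝ 2 μ) :
    koop S hS f =ᵐ[μ] f ∘ S := Lp.coeFn_compMeasurePreserving f hS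

lemma koop_norm (S : X → X) (hS : MeasurePreserving S μ μ) : ‖koop S hS‖ ≤ 1 :=
  LinearIsometry.norm_toContinuousLinearMap_le _

noncomputable def kproj (S : X → X) (hS : MeasurePreserving S μ μ) : Lp ℝ 2 μ →L[ℝ] Lp ℝ 2 μ :=
  ((koop S hS).eqLocus (1 : Lp ℝ 2 μ →L[ℝ] Lp ℝ 2 μ)).starProjection

lemma kproj_fix (S : X → X) (hS : MeasurePreserving S μ μ) (f : Lp ℝ 2 μ) :
    koop S hS (kproj S hS f) = kproj S hS f :=
  ((koop S hS).eqLocus (1 : Lp ℝ 2 μ →L[ℝ] Lp ℝ 2 μ)).starProjection_apply_mem f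

lemma kproj_of_fix (S : X → X) (hS : MeasurePreserving S μ μ) (f : Lp ℝ 2 μ)
    (h : koop S hS f = f) : kproj S hS f = f :=
  Submodule.starProjection_eq_self_iff.2 h

lemma kproj_tendsto (S : X → X) (hS : MeasurePreserving S μ μ) (f : Lp ℝ 2 μ) :
    Tendsto (fun n : ℕ => (n : ℝ)⁻¹ • ∑ k ∈ Finset.range n, (koop S hS)^[k] f) atTop
      (𝓝 (kproj S hS f)) :=
  (koop S hS).tendsto_birkhoffAverage_orthogonalProjection (koop_norm S hS) f

lemma kproj_comm (S R : X → X) (hS : MeasurePreserving S μ μ) (hR : MeasurePreserving R μ μ)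
    (h : ∀ f, koop S hS (koop R hR f) = koop R hR (koop S hS f)) (f : Lp ℝ 2 μ)
    (hf : koop R hR f = f) : koop R hR (kproj S hS f) = kproj S hS f := by
  refine tendsto_nhds_unique (((koop R hR).continuous.tendsto _).comp (kproj_tendsto S hS f)) ?_
  refine (kproj_tendsto S hS f).congr fun n => ?_
  have hc : ∀ k : ℕ, koop R hR ((koop S hS)^[k] f) = (koop S hS)^[k] f := by
    intro k
    induction k with
    | zero => exact hf
    | succ k ih => rw [Function.iterate_succ_apply', ← h, ih]
  simp [map_sum, hc]

lemma koop_nonneg (S : X → X) (hS : MeasurePreserving S μ μ) {f : Lp ℝ 2 μ} (h : 0 ≤ f) :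
    0 ≤ koop S hS f := by
  rw [← Lp.coeFn_nonneg] at h ⊢
  filter_upwards [koop_coe S hS f, hS.quasiMeasurePreserving.ae h] with x h1 h2
  rw [h1]; exact h2

lemma kproj_nonneg (S : X → X) (hS : MeasurePreserving S μ μ) {f : Lp ℝ 2 μ} (h : 0 ≤ f) :
    0 ≤ kproj S hS f := by
  refine ge_of_tendsto' (kproj_tendsto S hS f) fun n => ?_
  have hc : ∀ k : ℕ, 0 ≤ (koop S hS)^[k] f := by
    intro k
    induction k with
    | zero => exact h
    | succ k ih => rw [Function.iterate_succ_apply']; exact koop_nonneg S hS ih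
  have h2 : 0 ≤ ∑ k ∈ Finset.range n, (koop S hS)^[k] f := Finset.sum_nonneg fun k _ => hc k
  generalize (∑ k ∈ Finset.range n, (koop S hS)^[k] f) = F at h2
  rw [← Lp.coeFn_nonneg] at h2 ⊢
  filter_upwards [h2, Lp.coeFn_smul ((n : ℝ)⁻¹) F] with x h3 h4
  rw [h4]
  have : (0:ℝ) ≤ F x := h3
  simp only [Pi.zero_apply, Pi.smul_apply, smul_eq_mul]; positivity

lemma kproj_mono (S : X → X) (hS : MeasurePreserving S μ μ) {f g : Lp ℝ 2 μ} (h : f ≤ g) :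
    kproj S hS f ≤ kproj S hS g := by
  have := kproj_nonneg S hS (sub_nonneg.2 h)
  rwa [map_sub, sub_nonneg] at this

lemma kproj_inner (S : X → X) (hS : MeasurePreserving S μ μ) (f g : Lp ℝ 2 μ)
    (hg : koop S hS g = g) : inner ℝ g (kproj S hS f) = inner ℝ g f := by
  have h1 := Submodule.inner_starProjection_left_eq_right
    ((koop S hS).eqLocus (1 : Lp ℝ 2 μ →L[ℝ] Lp ℝ 2 μ)) g f
  have h2 := kproj_of_fix S hS g hg
  unfold kproj at *
  rw [← h1, h2]

/-- functional form of the projection -/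
lemma kproj_setIntegral (S : X → X) (hS : MeasurePreserving S μ μ) (f : Lp ℝ 2 μ) (B : Set X)
    (hB : MeasurableSet B) (hBi : S ⁻¹' B =ᵐ[μ] B) :
    ∫ x in B, kproj S hS f x ∂μ = ∫ x in B, f x ∂μ := by
  set g : Lp ℝ 2 μ := indicatorConstLp 2 hB (measure_ne_top μ B) (1 : ℝ) with hg
  have hgc : (g : X → ℝ) =ᵐ[μ] B.indicator (fun _ => (1:ℝ)) := indicatorConstLp_coeFn
  have hgf : koop S hS g = g := by
    apply Lp.ext
    filter_upwards [koop_coe S hS g, hgc, hS.quasiMeasurePreserving.ae hgc, hBi] with x h1 h2 h3 h4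
    rw [h1, h2, Function.comp, h3]
    have : (S x ∈ B) = (x ∈ B) := h4
    have h5 : S x ∈ B ↔ x ∈ B := iff_of_eq this
    by_cases hx : x ∈ B
    · rw [Set.indicator_of_mem hx, Set.indicator_of_mem (h5.2 hx)]
    · rw [Set.indicator_of_notMem hx, Set.indicator_of_notMem (fun h => hx (h5.1 h))]
  have h := kproj_inner S hS f g hgf
  rw [hg, L2.inner_indicatorConstLp_one, L2.inner_indicatorConstLp_one] at h
  exact h

end Proj

section Struct
open Filter Topology
set_option linter.unusedSectionVars false

variable {X : Type*} [MeasurableSpace X] {μ : Measure X} [IsProbabilityMeasure μ]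
    {T : ℤ × ℤ → X → X}

lemma lp_coe_sum {ι : Type*} (S : Finset ι) (F : ι → Lp ℝ 2 μ) :
    ((∑ i ∈ S, F i : Lp ℝ 2 μ) : X → ℝ) =ᵐ[μ] fun x => ∑ i ∈ S, F i x := by
  classical
  induction S using Finset.induction_on with
  | empty =>
    filter_upwards [Lp.coeFn_zero ℝ 2 μ] with x hx
    simpa using hx
  | insert a S ha ih =>
    rw [Finset.sum_insert ha]
    filter_upwards [Lp.coeFn_add (F a) (∑ i ∈ S, F i), ih] with x h1 h2
    rw [h1, Pi.add_apply, h2, Finset.sum_insert ha]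

lemma ae_orbit (hmp : ∀ g, MeasurePreserving (T g) μ μ) {p : X → Prop} (h : ∀ᵐ x ∂μ, p x) :
    ∀ᵐ x ∂μ, ∀ g, p (T g x) :=
  ae_all_iff.2 fun g => (hmp g).quasiMeasurePreserving.ae h

variable (hmp : ∀ g, MeasurePreserving (T g) μ μ) (hT0 : T 0 = id)
    (hTadd : ∀ g h : ℤ × ℤ, T (g + h) = T g ∘ T h)

include hTadd in
lemma koop_add (g h : ℤ × ℤ) (f : Lp ℝ 2 μ) :
    koop (T g) (hmp g) (koop (T h) (hmp h) f) = koop (T (g + h)) (hmp (g + h)) f := by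
  apply Lp.ext
  filter_upwards [koop_coe (T g) (hmp g) (koop (T h) (hmp h) f),
    (hmp g).quasiMeasurePreserving.ae (koop_coe (T h) (hmp h) f),
    koop_coe (T (g + h)) (hmp (g + h)) f] with x h1 h2 h3
  rw [h1, h3, Function.comp, h2, add_comm, hTadd]
  rfl

include hT0 in
lemma koop_zero (f : Lp ℝ 2 μ) : koop (T 0) (hmp 0) f = f := by
  apply Lp.ext
  filter_upwards [koop_coe (T 0) (hmp 0) f] with x h1
  rw [h1, hT0]; rfl

include hTadd in
lemma koop_comm (g h : ℤ × ℤ) (f : Lp ℝ 2 μ) :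
    koop (T g) (hmp g) (koop (T h) (hmp h) f) = koop (T h) (hmp h) (koop (T g) (hmp g) f) := by
  rw [koop_add hmp hTadd, koop_add hmp hTadd]
  congr! 2
  · rw [add_comm]

include hT0 hTadd in
lemma koop_iter (g h : ℤ × ℤ) (k : ℕ) (f : Lp ℝ 2 μ) :
    (koop (T g) (hmp g))^[k] (koop (T h) (hmp h) f)
      = koop (T (h + k • g)) (hmp (h + k • g)) f := by
  induction k with
  | zero => simp
  | succ k ih =>
    rw [Function.iterate_succ_apply', ih, koop_add hmp hTadd]
    congr! 2
    · rw [succ_nsmul]; abel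

/-- The stabilizer of an `L²` function. -/
def stabL (hT0 : T 0 = id) (hTadd : ∀ g h : ℤ × ℤ, T (g + h) = T g ∘ T h) (f : Lp ℝ 2 μ) :
    AddSubgroup (ℤ × ℤ) where
  carrier := {g | koop (T g) (hmp g) f = f}
  zero_mem' := koop_zero hmp hT0 f
  add_mem' := fun {a b} ha hb => by
    simp only [Set.mem_ofPred_eq] at *
    rw [← koop_add hmp hTadd, hb, ha]
  neg_mem' := fun {a} ha => by
    simp only [Set.mem_ofPred_eq] at *
    conv_lhs => rw [← ha]
    rw [koop_add hmp hTadd]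
    conv_rhs => rw [← koop_zero hmp hT0 f]
    congr! 2
    · rw [neg_add_cancel]

lemma mem_stabL {f : Lp ℝ 2 μ} {g : ℤ × ℤ} :
    g ∈ stabL hmp hT0 hTadd f ↔ koop (T g) (hmp g) f = f := Iff.rfl

noncomputable def fA (μ : Measure X) [IsProbabilityMeasure μ] {A : Set X} (hA : MeasurableSet A) :
    Lp ℝ 2 μ := indicatorConstLp 2 hA (measure_ne_top μ A) (1 : ℝ)

lemma fA_coe {A : Set X} (hA : MeasurableSet A) :
    fA μ hA =ᵐ[μ] A.indicator 1 := indicatorConstLp_coeFn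

include hmp hT0 hTadd in
lemma struct1 {A : Set X} (hA : MeasurableSet A) (p : AddMonoidAlgebra ℤ (ℤ × ℤ)) (hp : p ≠ 0)
    (hpA : polyAct T p (A.indicator 1) =ᵐ[μ] (fun _ => (0 : ℝ))) :
    ∃ (S : Finset (ℤ × ℤ)) (vec : ℤ × ℤ → ℤ × ℤ) (G : ℤ × ℤ → Lp ℝ 2 μ),
      (∀ s ∈ S, vec s ≠ 0) ∧ (∀ s ∈ S, vec s ∈ stabL hmp hT0 hTadd (G s)) ∧
      fA μ hA = ∑ s ∈ S, G s := by
  classical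
  obtain ⟨N, hN, hdil⟩ := dilation_good p
  obtain ⟨g0, hg0⟩ : ∃ g, p.coeff g ≠ 0 := by
    by_contra! h
    exact hp (AddMonoidAlgebra.coeff_eq_zero.1 (Finsupp.ext h))
  set S := p.coeff.support.erase g0 with hS
  set c0 : ℝ := (p.coeff g0 : ℝ) with hc0
  have hc00 : c0 ≠ 0 := by rw [hc0]; exact_mod_cast hg0
  have hfA := fA_coe (μ := μ) hA
  have key : ∀ k : ℕ, c0 • fA μ hA = -∑ g ∈ S, (p.coeff g : ℝ) •
      (koop (T (N • (g0 - g))) (hmp _))^[k] (koop (T (g0 - g)) (hmp _) (fA μ hA)) := by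
    intro k
    simp_rw [koop_iter hmp hT0 hTadd]
    rw [eq_neg_iff_add_eq_zero]
    apply Lp.ext
    have e1 : ∀ᵐ x ∂μ, ∀ g ∈ S, (koop (T (g0 - g + k • N • (g0 - g))) (hmp _) (fA μ hA)) x =
        A.indicator 1 (T (g0 - g + k • N • (g0 - g)) x) := by
      rw [Filter.eventually_all_finset S]
      intro g _
      filter_upwards [koop_coe (T (g0 - g + k • N • (g0 - g))) (hmp _) (fA μ hA),
        (hmp (g0 - g + k • N • (g0 - g))).quasiMeasurePreserving.ae hfA] with x h1 h2
      rw [h1]; exact h2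
    have e2 : ∀ᵐ x ∂μ, ∀ g ∈ S, ((p.coeff g : ℝ) •
        (koop (T (g0 - g + k • N • (g0 - g))) (hmp _) (fA μ hA)) : Lp ℝ 2 μ) x =
        (p.coeff g : ℝ) * (koop (T (g0 - g + k • N • (g0 - g))) (hmp _) (fA μ hA)) x := by
      rw [Filter.eventually_all_finset S]
      intro g _
      exact Lp.coeFn_smul _ _
    filter_upwards [hfA, e1, e2, ae_orbit hmp hpA, Lp.coeFn_add (c0 • fA μ hA)
      (∑ g ∈ S, (p.coeff g : ℝ) • (koop (T (g0 - g + k • N • (g0 - g))) (hmp _) (fA μ hA))),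
      Lp.coeFn_smul c0 (fA μ hA), Lp.coeFn_zero ℝ 2 μ, lp_coe_sum S (fun g => (p.coeff g : ℝ) •
        (koop (T (g0 - g + k • N • (g0 - g))) (hmp _) (fA μ hA)))]
      with x h0 h1 h2 h3 h4 h5 h6 h7
    rw [h4, h6, Pi.add_apply, h5, h7, Pi.smul_apply, smul_eq_mul, h0, Pi.zero_apply]
    rw [Finset.sum_congr rfl (fun g hg => (h2 g hg).trans (by rw [h1 g hg]))]
    set α : ℤ × ℤ → ℤ := fun h => A.indicator 1 (T h x) with hα
    have hαR : ∀ h, (A.indicator (1 : X → ℝ) (T h x)) = (α h : ℝ) := by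
      intro h; simp only [hα, Set.indicator]; split_ifs <;> simp
    have h8 := hdil α (fun h => by simp only [hα, Set.indicator]; split_ifs <;> simp) (fun h => by
      have := h3 h
      simp only [polyAct] at this
      have e : ∀ g, T (-g) (T h x) = T (h - g) x := fun g => by
        rw [sub_eq_neg_add, hTadd]; rfl
      simp_rw [e, hαR] at this
      rw [Finsupp.sum] at this ⊢
      exact_mod_cast this) k ((1 + k * N) • g0)
    rw [Finsupp.sum, ← Finset.add_sum_erase _ _ (Finsupp.mem_support_iff.2 hg0), sub_self] at h8
    have h9 : A.indicator (1 : X → ℝ) x = (α 0 : ℝ) := by rw [← hαR, hT0]; rfl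
    simp_rw [hαR, h9]
    have h10 : ∀ g, g0 - g + k • N • (g0 - g) = (1 + k * N) • g0 - (1 + k * N) • g := by
      intro g
      rw [smul_smul, ← smul_sub, add_smul, one_smul]
    simp_rw [h10]
    rw [hc0]
    exact_mod_cast h8
  have lim : c0 • fA μ hA = -∑ g ∈ S, (p.coeff g : ℝ) •
      kproj (T (N • (g0 - g))) (hmp _) (koop (T (g0 - g)) (hmp _) (fA μ hA)) := by
    have t1 : Tendsto (fun n : ℕ => -∑ g ∈ S, (p.coeff g : ℝ) • ((n : ℝ)⁻¹ •
        ∑ k ∈ Finset.range n, (koop (T (N • (g0 - g))) (hmp _))^[k]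
          (koop (T (g0 - g)) (hmp _) (fA μ hA)))) atTop (𝓝 (-∑ g ∈ S, (p.coeff g : ℝ) •
      kproj (T (N • (g0 - g))) (hmp _) (koop (T (g0 - g)) (hmp _) (fA μ hA)))) :=
      (tendsto_finsetSum _ fun g _ => (kproj_tendsto _ _ _).const_smul _).neg
    refine tendsto_nhds_unique (tendsto_const_nhds.congr' ?_) t1
    filter_upwards [eventually_gt_atTop 0] with n hn
    have : ∀ k ∈ Finset.range n, c0 • fA μ hA = -∑ g ∈ S, (p.coeff g : ℝ) •
      (koop (T (N • (g0 - g))) (hmp _))^[k] (koop (T (g0 - g)) (hmp _) (fA μ hA)) := fun k _ => key k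
    have h2 := Finset.sum_congr rfl this
    rw [Finset.sum_const, Finset.card_range] at h2
    have h3 : c0 • fA μ hA = (n : ℝ)⁻¹ • (n • (c0 • fA μ hA)) := by
      rw [← Nat.cast_smul_eq_nsmul ℝ, smul_smul, inv_mul_cancel₀ (by exact_mod_cast hn.ne'), one_smul]
    rw [h3, h2, Finset.sum_neg_distrib, smul_neg, Finset.sum_comm, Finset.smul_sum]
    congr 1
    refine Finset.sum_congr rfl fun g _ => ?_
    rw [← Finset.smul_sum, smul_comm]
  refine ⟨S, fun g => N • (g0 - g), fun g => (-(c0⁻¹ * p.coeff g)) • 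
      kproj (T (N • (g0 - g))) (hmp _) (koop (T (g0 - g)) (hmp _) (fA μ hA)), ?_, ?_, ?_⟩
  · intro s hs
    exact smul_ne_zero hN.ne' (sub_ne_zero.2 (Finset.ne_of_mem_erase hs).symm)
  · intro s hs
    rw [mem_stabL, map_smul, kproj_fix]
  · have : fA μ hA = c0⁻¹ • (c0 • fA μ hA) := by rw [smul_smul, inv_mul_cancel₀ hc00, one_smul]
    refine this.trans ?_
    rw [lim, smul_neg, Finset.smul_sum, ← Finset.sum_neg_distrib]
    refine Finset.sum_congr rfl fun g _ => ?_
    rw [smul_smul]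
    exact (neg_smul _ _).symm

def dt (v w : ℤ × ℤ) : ℤ := v.1 * w.2 - v.2 * w.1

lemma dt_smul (v w g : ℤ × ℤ) : dt v w • g = dt g w • v + dt v g • w := by
  ext <;> simp [dt] <;> ring

noncomputable def slope' (v : ℤ × ℤ) : ℚ × Prop := ((v.1 : ℚ) / v.2, v.2 = 0)

lemma slope_eq {v w : ℤ × ℤ} (hv : v ≠ 0) (hw : w ≠ 0) : slope' v = slope' w ↔ dt v w = 0 := by
  obtain ⟨a, b⟩ := v
  obtain ⟨c, d⟩ := w
  simp only [slope', dt, Prod.mk.injEq, eq_iff_iff, ne_eq, Prod.mk_eq_zero] at *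
  by_cases hb : b = 0
  · subst hb
    have ha : a ≠ 0 := by tauto
    by_cases hd : d = 0
    · simp [hd]
    · simp [hd, ha]
  · by_cases hd : d = 0
    · subst hd
      have hc : c ≠ 0 := by tauto
      simp [hb, hc]
    · have hb' : (b : ℚ) ≠ 0 := by exact_mod_cast hb
      have hd' : (d : ℚ) ≠ 0 := by exact_mod_cast hd
      simp only [hb, hd, iff_self, and_true]
      rw [div_eq_div_iff hb' hd', sub_eq_zero, mul_comm b c]
      norm_cast

lemma parallel_mult {v w : ℤ × ℤ} (hv : v ≠ 0) (h : dt v w = 0) :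
    ∃ b c : ℤ, b ≠ 0 ∧ b • w = c • v := by
  obtain ⟨a, b⟩ := v
  obtain ⟨c, d⟩ := w
  simp only [dt, ne_eq, Prod.mk_eq_zero] at *
  by_cases ha : a = 0
  · subst ha
    refine ⟨b, d, by tauto, ?_⟩
    have hb : b ≠ 0 := by tauto
    have : c = 0 := by simpa [hb] using h
    simp [this, mul_comm]
  · refine ⟨a, c, ha, ?_⟩
    simp only [Prod.smul_mk, smul_eq_mul, Prod.mk.injEq]
    constructor <;> linarith

include hmp hT0 hTadd in
lemma struct2 {A : Set X} (hA : MeasurableSet A) (p : AddMonoidAlgebra ℤ (ℤ × ℤ)) (hp : p ≠ 0)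
    (hpA : polyAct T p (A.indicator 1) =ᵐ[μ] (fun _ => (0 : ℝ))) :
    ∃ (I : Finset (ℚ × Prop)) (vec : ℚ × Prop → ℤ × ℤ) (F : ℚ × Prop → Lp ℝ 2 μ),
      (∀ s ∈ I, vec s ≠ 0) ∧ (∀ s ∈ I, vec s ∈ stabL hmp hT0 hTadd (F s)) ∧
      (∀ s ∈ I, ∀ t ∈ I, s ≠ t → dt (vec s) (vec t) ≠ 0) ∧
      fA μ hA = ∑ s ∈ I, F s := by
  classical
  obtain ⟨S, vec, G, h1, h2, h3⟩ := struct1 hmp hT0 hTadd hA p hp hpA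
  set I := S.image (fun s => slope' (vec s)) with hI
  have hrep : ∀ τ : ℚ × Prop, ∃ s, τ ∈ I → s ∈ S ∧ slope' (vec s) = τ := by
    intro τ
    by_cases h : τ ∈ I
    · obtain ⟨s, hs, e⟩ := Finset.mem_image.1 h
      exact ⟨s, fun _ => ⟨hs, e⟩⟩
    · exact ⟨0, fun h' => absurd h' h⟩
  choose rep hrep using hrep
  have hM : ∀ τ, ∃ M : ℤ, τ ∈ I → M ≠ 0 ∧ ∀ s ∈ S, slope' (vec s) = τ →
      ∃ c : ℤ, M • vec (rep τ) = c • vec s := by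
    intro τ
    by_cases hτ : τ ∈ I
    · have : ∀ s, ∃ b : ℤ, b ≠ 0 ∧ (s ∈ S → slope' (vec s) = τ →
        ∃ c : ℤ, b • vec (rep τ) = c • vec s) := by
        intro s
        by_cases h : s ∈ S ∧ slope' (vec s) = τ
        · obtain ⟨r1, r2⟩ := hrep τ hτ
          obtain ⟨b, c, hb, e⟩ := parallel_mult (h1 s h.1) ((slope_eq (h1 s h.1) (h1 _ r1)).1
            (h.2.trans r2.symm))
          exact ⟨b, hb, fun _ _ => ⟨c, e⟩⟩
        · exact ⟨1, one_ne_zero, fun h3 h4 => absurd ⟨h3, h4⟩ h⟩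
      choose b hb hb' using this
      refine ⟨∏ s ∈ S, b s, fun _ => ⟨Finset.prod_ne_zero_iff.2 fun s _ => hb s, fun s hs e => ?_⟩⟩
      obtain ⟨c, hc⟩ := hb' s hs e
      refine ⟨(∏ s ∈ S.erase s, b s) * c, ?_⟩
      rw [← Finset.prod_erase_mul _ _ hs, mul_smul, hc, smul_smul]
    · exact ⟨0, fun h => absurd h hτ⟩
  choose M hM using hM
  refine ⟨I, fun τ => M τ • vec (rep τ), fun τ => ∑ s ∈ S with slope' (vec s) = τ, G s, ?_, ?_, ?_, ?_⟩
  · intro τ hτ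
    exact smul_ne_zero (hM τ hτ).1 (h1 _ (hrep τ hτ).1)
  · intro τ hτ
    rw [mem_stabL, map_sum]
    refine Finset.sum_congr rfl fun s hs => ?_
    rw [Finset.mem_filter] at hs
    obtain ⟨c, hc⟩ := (hM τ hτ).2 s hs.1 hs.2
    change M τ • vec (rep τ) ∈ stabL hmp hT0 hTadd (G s)
    rw [hc]
    exact AddSubgroup.zsmul_mem _ (h2 s hs.1) c
  · intro τ hτ τ' hτ' hne hdt
    refine hne ?_
    have e : dt (M τ • vec (rep τ)) (M τ' • vec (rep τ')) = M τ * M τ' * dt (vec (rep τ)) (vec (rep τ')) := by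
      simp [dt]; ring
    rw [e] at hdt
    have := (mul_eq_zero.1 hdt).resolve_left (mul_ne_zero (hM τ hτ).1 (hM τ' hτ').1)
    have := (slope_eq (h1 _ (hrep τ hτ).1) (h1 _ (hrep τ' hτ').1)).2 this
    rwa [(hrep τ hτ).2, (hrep τ' hτ').2] at this
  · rw [h3, Finset.sum_fiberwise_of_maps_to]
    intro s hs
    exact Finset.mem_image_of_mem _ hs

end Struct

section PolySeq
variable {G : Type*} [AddCommGroup G]

lemma inv_zsmul {β : Type*} {α : ℤ × ℤ → β} {v : ℤ × ℤ} (h : ∀ g, α (g + v) = α g) (k : ℤ) (g : ℤ × ℤ) :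
    α (g + k • v) = α g := by
  induction k using Int.induction_on with
  | zero => simp
  | succ i ih => rw [add_smul, one_smul, ← add_assoc, h, ih]
  | pred i ih =>
    have := h (g + (-(i:ℤ) - 1) • v)
    rw [show g + (-(i:ℤ) - 1) • v + v = g + (-(i:ℤ)) • v by rw [sub_smul, one_smul]; abel, ih] at this
    exact this.symm

lemma poly_seq {ι : Type*} (V : Finset ι) : ∀ (α : ℤ × ℤ → G) (αt : ι → ℤ × ℤ → G) (v w : ℤ × ℤ)
    (vt : ι → ℤ × ℤ), (∀ g, α (g + v) = α g) → (∀ t ∈ V, ∀ g, αt t (g + vt t) = αt t g) →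
    (∀ t ∈ V, ∃ a b : ℤ, w = a • v + b • vt t) → (∀ g, α g = ∑ t ∈ V, αt t g) →
    ∀ g0, SPoly V.card (fun n : ℤ => α (g0 + n • w)) := by
  classical
  induction V using Finset.induction_on with
  | empty =>
    intro α αt v w vt h1 h2 h3 h4 g0
    simp only [Finset.card_empty, SPoly]
    intro n
    rw [h4]; simp
  | insert t V ht ih =>
    intro α αt v w vt h1 h2 h3 h4 g0
    rw [Finset.card_insert_of_notMem ht]
    intro h
    obtain ⟨a, b, hw⟩ := h3 t (Finset.mem_insert_self _ _)
    have e : ∀ g, α (g + h • w) = α (g + (h * b) • vt t) := by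
      intro g
      rw [hw, smul_add, smul_smul, smul_smul, add_comm ((h * a) • v), ← add_assoc, inv_zsmul h1]
    have := ih (fun g => α (g + h • w) - α g)
      (fun t' g => αt t' (g + (h * b) • vt t) - αt t' g) v w vt
      (fun g => by
        rw [add_right_comm, h1, h1])
      (fun t' ht' g => by
        rw [add_right_comm, h2 t' (Finset.mem_insert_of_mem ht'), h2 t' (Finset.mem_insert_of_mem ht')])
      (fun t' ht' => h3 t' (Finset.mem_insert_of_mem ht'))
      (fun g => by
        rw [e, h4, h4, Finset.sum_insert ht, Finset.sum_insert ht,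
          inv_zsmul (h2 t (Finset.mem_insert_self _ _)), Finset.sum_sub_distrib]
        abel) g0
    convert this using 2 with n
    simp only [add_smul, add_assoc]

end PolySeq

section Erg
set_option linter.unusedSectionVars false
open Filter Topology
variable {X : Type*} [MeasurableSpace X] {μ : Measure X} [IsProbabilityMeasure μ]
    {T : ℤ × ℤ → X → X}

/-- stabilizer of a set up to null sets -/
def stabS (hmp : ∀ g, MeasurePreserving (T g) μ μ) (hT0 : T 0 = id)
    (hTadd : ∀ g h : ℤ × ℤ, T (g + h) = T g ∘ T h) (B : Set X) :
    AddSubgroup (ℤ × ℤ) where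
  carrier := {g | ∀ᵐ x ∂μ, T g x ∈ B ↔ x ∈ B}
  zero_mem' := by simp [hT0]
  add_mem' := fun {a b} ha hb => by
    simp only [Set.mem_ofPred_eq] at *
    filter_upwards [hb, (hmp b).quasiMeasurePreserving.ae ha] with x h1 h2
    rw [hTadd, Function.comp, h2, h1]
  neg_mem' := fun {a} ha => by
    simp only [Set.mem_ofPred_eq] at *
    filter_upwards [(hmp (-a)).quasiMeasurePreserving.ae ha] with x h2
    rw [← h2]
    have : T a (T (-a) x) = x := by
      have := hTadd a (-a)
      rw [add_neg_cancel, hT0] at this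
      exact (congrFun this x).symm
    rw [this]

lemma ae_iff_setEq {B C : Set X} : (B =ᵐ[μ] C) ↔ ∀ᵐ x ∂μ, x ∈ B ↔ x ∈ C := by
  constructor
  · intro h
    filter_upwards [h] with x hx using iff_of_eq hx
  · intro h
    filter_upwards [h] with x hx using propext hx

variable (hmp : ∀ g, MeasurePreserving (T g) μ μ) (hT0 : T 0 = id)
    (hTadd : ∀ g h : ℤ × ℤ, T (g + h) = T g ∘ T h)
    (herg : ∀ S : Set X, MeasurableSet S → (∀ g : ℤ × ℤ, T g ⁻¹' S =ᵐ[μ] S) →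
      μ S = 0 ∨ μ S = 1)

lemma mem_stabS {B : Set X} {g : ℤ × ℤ} :
    g ∈ stabS hmp hT0 hTadd B ↔ ∀ᵐ x ∂μ, T g x ∈ B ↔ x ∈ B := Iff.rfl

include herg in
lemma index_bound (Λ : AddSubgroup (ℤ × ℤ)) [Λ.FiniteIndex] (B : Set X) (hB : MeasurableSet B)
    (hinv : Λ ≤ stabS hmp hT0 hTadd B) (h0 : μ B ≠ 0) : 1 ≤ (Λ.index : ENNReal) * μ B := by
  have hm : MeasurableSet (⋃ g : ℤ × ℤ, T g ⁻¹' B) :=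
    MeasurableSet.iUnion fun g => (hmp g).measurable hB
  have h1 : μ (⋃ g : ℤ × ℤ, T g ⁻¹' B) = 1 := by
    refine (herg _ hm ?_).resolve_left ?_
    · intro g
      refine ae_iff_setEq.2 (Filter.Eventually.of_forall fun x => ?_)
      simp only [Set.mem_preimage, Set.mem_iUnion]
      have e : ∀ i, T i (T g x) = T (i + g) x := fun i => by rw [hTadd]; rfl
      simp only [e]
      constructor
      · rintro ⟨i, hi⟩; exact ⟨i + g, hi⟩
      · rintro ⟨i, hi⟩; exact ⟨i - g, by simpa using hi⟩
    · intro h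
      exact h0 (measure_mono_null (fun x hx => Set.mem_iUnion.2 ⟨0, by simpa [hT0] using hx⟩) h)
  have h2 : ∀ᵐ x ∂μ, ∀ g : ℤ × ℤ, ∀ l ∈ Λ, T l (T g x) ∈ B ↔ T g x ∈ B := by
    refine ae_all_iff.2 fun g => ae_all_iff.2 fun l => ?_
    by_cases hl : l ∈ Λ
    · filter_upwards [(hmp g).quasiMeasurePreserving.ae (hinv hl)] with x hx _ using hx
    · simp [hl]
  have : Fintype ((ℤ × ℤ) ⧸ Λ) := Λ.fintypeQuotientOfFiniteIndex
  calc (1 : ENNReal) = μ (⋃ g : ℤ × ℤ, T g ⁻¹' B) := h1.symm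
    _ ≤ μ (⋃ q : (ℤ × ℤ) ⧸ Λ, T q.out ⁻¹' B) := by
        apply measure_mono_ae
        filter_upwards [h2] with x hx h
        obtain ⟨g, hg⟩ := Set.mem_iUnion.1 h
        refine Set.mem_iUnion.2 ⟨(g : (ℤ × ℤ) ⧸ Λ), ?_⟩
        obtain ⟨l, hl⟩ := QuotientAddGroup.mk_out_eq_add Λ g
        have : T (g : (ℤ × ℤ) ⧸ Λ).out x = T l (T g x) := by
          rw [hl, add_comm, hTadd]; rfl
        change T _ x ∈ B
        rw [this]
        exact (hx g l l.2).2 hg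
    _ ≤ ∑' q : (ℤ × ℤ) ⧸ Λ, μ (T q.out ⁻¹' B) := measure_iUnion_le _
    _ = ∑' q : (ℤ × ℤ) ⧸ Λ, μ B := by
        simp_rw [(hmp _).measure_preimage hB.nullMeasurableSet]
    _ = (Λ.index : ENNReal) * μ B := by
        rw [tsum_fintype, Finset.sum_const, nsmul_eq_mul, Finset.card_univ, AddSubgroup.index,
          Nat.card_eq_fintype_card]

/-- ergodic component predicate -/
def IsComp (hmp : ∀ g, MeasurePreserving (T g) μ μ) (hT0 : T 0 = id)
    (hTadd : ∀ g h : ℤ × ℤ, T (g + h) = T g ∘ T h) (Λ : AddSubgroup (ℤ × ℤ)) (Y : Set X) : Prop :=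
  MeasurableSet Y ∧ Λ ≤ stabS hmp hT0 hTadd Y ∧
  ∀ S : Set X, MeasurableSet S → Λ ≤ stabS hmp hT0 hTadd S → μ (Y ∩ S) = 0 ∨ μ (Y \ S) = 0

lemma stabS_inter {B C : Set X} : stabS hmp hT0 hTadd B ⊓ stabS hmp hT0 hTadd C ≤
    stabS hmp hT0 hTadd (B ∩ C) := by
  rintro g ⟨h1, h2⟩
  have h1' := (mem_stabS hmp hT0 hTadd).1 h1
  have h2' := (mem_stabS hmp hT0 hTadd).1 h2
  rw [mem_stabS]
  filter_upwards [h1', h2'] with x hx hy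
  rw [Set.mem_inter_iff, Set.mem_inter_iff, hx, hy]

lemma stabS_diff {B C : Set X} : stabS hmp hT0 hTadd B ⊓ stabS hmp hT0 hTadd C ≤
    stabS hmp hT0 hTadd (B \ C) := by
  rintro g ⟨h1, h2⟩
  have h1' := (mem_stabS hmp hT0 hTadd).1 h1
  have h2' := (mem_stabS hmp hT0 hTadd).1 h2
  rw [mem_stabS]
  filter_upwards [h1', h2'] with x hx hy
  rw [Set.mem_sdiff, Set.mem_sdiff, hx, hy]

include herg in
lemma comps_aux (Λ : AddSubgroup (ℤ × ℤ)) [Λ.FiniteIndex] : ∀ (k : ℕ) (Y : Set X),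
    MeasurableSet Y → Λ ≤ stabS hmp hT0 hTadd Y → (Λ.index : ENNReal) * μ Y < k →
    ∃ 𝒞 : Finset (Set X), (∀ C ∈ 𝒞, IsComp hmp hT0 hTadd Λ C ∧ μ C ≠ 0 ∧ C ⊆ Y) ∧
      (∀ C ∈ 𝒞, ∀ D ∈ 𝒞, C ≠ D → Disjoint C D) ∧ μ (Y \ ⋃ C ∈ 𝒞, C) = 0 := by
  classical
  intro k
  induction k with
  | zero => intro Y _ _ h; simp at h
  | succ k ih =>
    intro Y hY hinv hlt
    by_cases h0 : μ Y = 0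
    · exact ⟨∅, by simp, by simp, by simpa using h0⟩
    by_cases hE : IsComp hmp hT0 hTadd Λ Y
    · refine ⟨{Y}, ?_, ?_, by simp⟩
      · intro C hC
        rw [Finset.mem_singleton.1 hC]
        exact ⟨hE, h0, subset_rfl⟩
      · intro C hC D hD hne
        exact absurd ((Finset.mem_singleton.1 hC).trans (Finset.mem_singleton.1 hD).symm) hne
    · have : ∃ S : Set X, MeasurableSet S ∧ Λ ≤ stabS hmp hT0 hTadd S ∧ μ (Y ∩ S) ≠ 0 ∧
          μ (Y \ S) ≠ 0 := by
        by_contra! h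
        refine hE ⟨hY, hinv, fun S h1 h2 => ?_⟩
        by_cases h3 : μ (Y ∩ S) = 0
        · exact Or.inl h3
        · exact Or.inr (h S h1 h2 h3)
      obtain ⟨S, hS, hSi, hS1, hS2⟩ := this
      have i1 : Λ ≤ stabS hmp hT0 hTadd (Y ∩ S) := (le_inf hinv hSi).trans (stabS_inter hmp hT0 hTadd)
      have i2 : Λ ≤ stabS hmp hT0 hTadd (Y \ S) := (le_inf hinv hSi).trans (stabS_diff hmp hT0 hTadd)
      have b1 := index_bound hmp hT0 hTadd herg Λ _ (hY.inter hS) i1 hS1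
      have b2 := index_bound hmp hT0 hTadd herg Λ _ (hY.diff hS) i2 hS2
      have hadd : (Λ.index : ENNReal) * μ (Y ∩ S) + (Λ.index : ENNReal) * μ (Y \ S)
          = (Λ.index : ENNReal) * μ Y := by
        rw [← mul_add, measure_inter_add_sdiff _ hS]
      have l1 : (Λ.index : ENNReal) * μ (Y ∩ S) < k := by
        have : (Λ.index : ENNReal) * μ (Y ∩ S) + 1 < k + 1 := by
          calc _ ≤ _ := by gcongr
            _ = _ := hadd
            _ < _ := by exact_mod_cast hlt
        exact lt_of_add_lt_add_right this
      have l2 : (Λ.index : ENNReal) * μ (Y \ S) < k := by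
        have : (Λ.index : ENNReal) * μ (Y \ S) + 1 < k + 1 := by
          calc _ ≤ (Λ.index : ENNReal) * μ (Y \ S) + (Λ.index : ENNReal) * μ (Y ∩ S) := by gcongr
            _ = (Λ.index : ENNReal) * μ Y := by rw [← hadd, add_comm]
            _ < _ := by exact_mod_cast hlt
        exact lt_of_add_lt_add_right this
      obtain ⟨C1, p1, q1, r1⟩ := ih _ (hY.inter hS) i1 l1
      obtain ⟨C2, p2, q2, r2⟩ := ih _ (hY.diff hS) i2 l2
      have dj : ∀ C ∈ C1, ∀ D ∈ C2, Disjoint C D := by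
        intro C hC D hD
        have a1 := (p1 C hC).2.2
        have a2 := (p2 D hD).2.2
        exact Set.disjoint_of_subset a1 a2 (Set.disjoint_left.2 fun x h1 h2 => h2.2 h1.2)
      refine ⟨C1 ∪ C2, ?_, ?_, ?_⟩
      · intro C hC
        rcases Finset.mem_union.1 hC with h | h
        · exact ⟨(p1 C h).1, (p1 C h).2.1, (p1 C h).2.2.trans Set.inter_subset_left⟩
        · exact ⟨(p2 C h).1, (p2 C h).2.1, (p2 C h).2.2.trans Set.sdiff_subset⟩
      · intro C hC D hD hne
        rcases Finset.mem_union.1 hC with h | h <;> rcases Finset.mem_union.1 hD with h' | h'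
        · exact q1 C h D h' hne
        · exact dj C h D h'
        · exact (dj D h' C h).symm
        · exact q2 C h D h' hne
      · refine measure_mono_null ?_ (measure_union_null r1 r2)
        intro x hx
        simp only [Set.mem_sdiff, Set.mem_iUnion, Finset.mem_union, Set.mem_union, Set.mem_inter_iff,
          exists_prop, not_exists, not_and] at hx ⊢
        by_cases hs : x ∈ S
        · exact Or.inl ⟨⟨hx.1, hs⟩, fun C hC => hx.2 C (Or.inl hC)⟩
        · exact Or.inr ⟨⟨hx.1, hs⟩, fun C hC => hx.2 C (Or.inr hC)⟩

include herg in
lemma comps (Λ : AddSubgroup (ℤ × ℤ)) [Λ.FiniteIndex] :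
    ∃ (n : ℕ) (Xs : Fin n → Set X), (∀ i, IsComp hmp hT0 hTadd Λ (Xs i)) ∧ (∀ i, μ (Xs i) ≠ 0) ∧
      (∀ i j, i ≠ j → Disjoint (Xs i) (Xs j)) ∧ μ (Set.univ \ ⋃ i, Xs i) = 0 := by
  obtain ⟨𝒞, h1, h2, h3⟩ := comps_aux hmp hT0 hTadd herg Λ (Λ.index + 1) Set.univ MeasurableSet.univ
    (fun g _ => by rw [mem_stabS]; simp) (by
      rw [measure_univ, mul_one]; exact_mod_cast Nat.lt_succ_self _)
  refine ⟨𝒞.card, fun i => (𝒞.equivFin.symm i : Set X), fun i => (h1 _ (𝒞.equivFin.symm i).2).1,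
    fun i => (h1 _ (𝒞.equivFin.symm i).2).2.1, fun i j hij => h2 _ (𝒞.equivFin.symm i).2 _ (𝒞.equivFin.symm j).2 ?_, ?_⟩
  · intro h
    exact hij (𝒞.equivFin.symm.injective (Subtype.ext h))
  · convert h3 using 3
    ext x
    simp only [Set.mem_iUnion]
    constructor
    · rintro ⟨i, hi⟩; exact ⟨_, (𝒞.equivFin.symm i).2, hi⟩
    · rintro ⟨C, hC, hx⟩; exact ⟨𝒞.equivFin ⟨C, hC⟩, by simpa using hx⟩

lemma ae_const {β : Type*} [MeasurableSpace β] [MeasurableSpace.CountablySeparated β] [Nonempty β]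
    {Λ : AddSubgroup (ℤ × ℤ)} {Y : Set X}
    (hY : IsComp hmp hT0 hTadd Λ Y) (h : X → β) (hh : Measurable h)
    (hinv : ∀ g ∈ Λ, ∀ᵐ x ∂μ, x ∈ Y → h (T g x) = h x) :
    ∃ c, ∀ᵐ x ∂μ, x ∈ Y → h x = c := by
  have := Filter.exists_eventuallyEq_const_of_forall_separating (l := ae (μ.restrict Y)) (f := h)
    MeasurableSet (fun U hU => by
      have hS : Λ ≤ stabS hmp hT0 hTadd (Y ∩ h ⁻¹' U) := by
        intro g hg
        rw [mem_stabS]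
        filter_upwards [(mem_stabS hmp hT0 hTadd).1 (hY.2.1 hg), hinv g hg] with x h1 h2
        simp only [Set.mem_inter_iff, Set.mem_preimage, h1]
        constructor
        · rintro ⟨a, b⟩; exact ⟨a, by rwa [h2 a] at b⟩
        · rintro ⟨a, b⟩; exact ⟨a, by rwa [h2 a]⟩
      rcases hY.2.2 _ (hY.1.inter (hh hU)) hS with h3 | h3
      · right
        rw [ae_restrict_iff' hY.1]
        rw [measure_eq_zero_iff_ae_notMem] at h3
        filter_upwards [h3] with x hx hxY hxU
        exact hx ⟨hxY, hxY, hxU⟩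
      · left
        rw [ae_restrict_iff' hY.1]
        rw [measure_eq_zero_iff_ae_notMem] at h3
        filter_upwards [h3] with x hx hxY
        by_contra hxU
        exact hx ⟨hxY, fun h => hxU h.2⟩)
  obtain ⟨c, hc⟩ := this
  refine ⟨c, ?_⟩
  exact (ae_restrict_iff' hY.1).1 hc

end Erg

section Equi
open Filter Topology

lemma continuous_integral_C (ν : Measure UnitAddCircle) [IsFiniteMeasure ν] :
    Continuous (fun f : C(UnitAddCircle, ℂ) => ∫ x, f x ∂ν) := by
  refine continuous_iff_continuousAt.2 fun f => ?_
  rw [ContinuousAt, tendsto_iff_norm_sub_tendsto_zero]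
  have hi : ∀ g : C(UnitAddCircle, ℂ), Integrable g ν := fun g =>
    g.continuous.integrable_of_hasCompactSupport (HasCompactSupport.of_compactSpace _)
  refine squeeze_zero (g := fun g => ‖g - f‖ * ν.real Set.univ) (fun _ => norm_nonneg _) (fun g => ?_) ?_
  · rw [← integral_sub (hi g) (hi f)]
    exact norm_integral_le_of_norm_le_const (Eventually.of_forall fun x => (g - f).norm_coe_le_norm x)
  · have := (tendsto_iff_norm_sub_tendsto_zero.1 (tendsto_id (x := 𝓝 f))).mul_const (ν.real Set.univ)
    simpa using this

lemma measure_ext_fourier (ν ν' : Measure UnitAddCircle) [IsFiniteMeasure ν] [IsFiniteMeasure ν']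
    (h : ∀ j : ℤ, ∫ x, ee (j • x) ∂ν = ∫ x, ee (j • x) ∂ν') : ν = ν' := by
  have hi : ∀ (ρ : Measure UnitAddCircle) [IsFiniteMeasure ρ], ∀ g : C(UnitAddCircle, ℂ), Integrable g ρ := fun ρ _ g =>
    g.continuous.integrable_of_hasCompactSupport (HasCompactSupport.of_compactSpace _)
  let W : Submodule ℂ C(UnitAddCircle, ℂ) :=
    { carrier := {f | ∫ x, f x ∂ν = ∫ x, f x ∂ν'}
      zero_mem' := by simp
      add_mem' := fun {f g} hf hg => by
        simp only [Set.mem_ofPred_eq, ContinuousMap.add_apply] at *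
        rw [integral_add (hi ν f) (hi ν g), integral_add (hi ν' f) (hi ν' g), hf, hg]
      smul_mem' := fun c f hf => by
        simp only [Set.mem_ofPred_eq, ContinuousMap.smul_apply] at *
        rw [integral_smul, integral_smul, hf] }
  have hcl : IsClosed (W : Set C(UnitAddCircle, ℂ)) :=
    isClosed_eq (continuous_integral_C ν) (continuous_integral_C ν')
  have hW : ∀ f, f ∈ W := by
    intro f
    have h1 : (Submodule.span ℂ (Set.range <| @fourier 1)).topologicalClosure ≤ W := by
      refine Submodule.topologicalClosure_minimal _ ?_ hcl
      rw [Submodule.span_le]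
      rintro _ ⟨j, rfl⟩
      exact h j
    rw [span_fourier_closure_eq_top] at h1
    exact h1 trivial
  refine ext_of_forall_integral_eq_of_IsFiniteMeasure fun f => ?_
  have := hW ⟨fun x => (f x : ℂ), by fun_prop⟩
  change ∫ x, (f x : ℂ) ∂ν = ∫ x, (f x : ℂ) ∂ν' at this
  have h3 := (integral_ofReal (𝕜 := ℂ) (f := f) (μ := ν)).symm.trans
    (this.trans (integral_ofReal (𝕜 := ℂ) (f := f) (μ := ν')))
  exact Complex.ofReal_injective h3

lemma integral_fourier_vol (j : ℤ) (hj : j ≠ 0) : ∫ x : UnitAddCircle, ee (j • x) = 0 := by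
  exact integral_eq_zero_of_add_right_eq_neg (μ := (volume : Measure UnitAddCircle))
      (fourier_add_half_inv_index (T := 1) hj zero_lt_one)

/-- representative in [0,1) -/
noncomputable def rp (x : UnitAddCircle) : ℝ := (AddCircle.equivIco 1 0 x : ℝ)

lemma rp_meas : Measurable rp :=
  measurable_subtype_coe.comp (AddCircle.measurableEquivIco 1 0).measurable

lemma rp_coe {x : ℝ} (h0 : 0 ≤ x) (h1 : x < 1) : rp (x : UnitAddCircle) = x := by
  have h : x ∈ Set.Ico (0:ℝ) (0 + 1) := ⟨h0, by simpa using h1⟩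
  simp only [rp]
  rw [AddCircle.equivIco_coe_eq h]

lemma rp_int : ∫ x : UnitAddCircle, rp x = 1 / 2 := by
  rw [← UnitAddCircle.integral_preimage 0 rp, zero_add, ← intervalIntegral.integral_of_le zero_le_one]
  have h2 : ∫ x in (0:ℝ)..1, rp (x : UnitAddCircle) = ∫ x in (0:ℝ)..1, x := by
    rw [intervalIntegral.integral_of_le zero_le_one, intervalIntegral.integral_of_le zero_le_one,
      integral_Ioc_eq_integral_Ioo, integral_Ioc_eq_integral_Ioo]
    refine setIntegral_congr_fun measurableSet_Ioo fun x hx => ?_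
    exact rp_coe hx.1.le hx.2
  rw [h2]
  simp

variable {X : Type*} [MeasurableSpace X] {μ : Measure X} [IsProbabilityMeasure μ]

lemma half_of_fourier (Y : Set X) (P : X → ℝ) (hP : Measurable P)
    (h01 : ∀ᵐ x ∂μ, 0 ≤ P x ∧ P x ≤ 1)
    (h : ∀ j : ℤ, j ≠ 0 → ∫ x in Y, ee (j • (P x : UnitAddCircle)) ∂μ = 0) :
    ∫ x in Y, P x ∂μ = μ.real Y / 2 := by
  have hPc : Measurable (fun x => (P x : UnitAddCircle)) := AddCircle.measurable_mk'.comp hP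
  have hem : ∀ j : ℤ, Continuous (fun x : UnitAddCircle => ee (j • x)) := fun j =>
    (fourier (T := 1) j).continuous
  have hν : (μ.restrict Y).map (fun x => (P x : UnitAddCircle)) = μ Y • volume := by
    have : IsFiniteMeasure (μ Y • (volume : Measure UnitAddCircle)) :=
      (volume : Measure UnitAddCircle).smul_finite (measure_ne_top μ Y)
    refine measure_ext_fourier _ _ fun j => ?_
    rw [integral_map hPc.aemeasurable (hem j).aestronglyMeasurable, integral_smul_measure]
    by_cases hj : j = 0
    · subst hj
      simp [ee, Measure.real]
    · rw [h j hj, integral_fourier_vol j hj, smul_zero]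
  have hne : ∀ᵐ x ∂(μ.restrict Y), (P x : UnitAddCircle) ≠ 0 := by
    have : (μ.restrict Y).map (fun x => (P x : UnitAddCircle)) {0} = 0 := by
      have h0 : (volume : Measure UnitAddCircle) {0} = 0 := by
        rw [← Metric.closedBall_zero (x := (0 : UnitAddCircle)), AddCircle.volume_closedBall]
        simp
      rw [hν]; simp [h0]
    rw [Measure.map_apply hPc (measurableSet_singleton 0), measure_eq_zero_iff_ae_notMem] at this
    exact this
  have e : ∫ x in Y, P x ∂μ = ∫ x in Y, rp (P x : UnitAddCircle) ∂μ := by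
    refine integral_congr_ae ?_
    filter_upwards [ae_restrict_of_ae h01, hne] with x h1 h2
    rw [rp_coe h1.1]
    refine lt_of_le_of_ne h1.2 fun h3 => h2 ?_
    rw [h3]; exact AddCircle.coe_period 1
  rw [e, ← integral_map (f := rp) hPc.aemeasurable rp_meas.aestronglyMeasurable, hν, integral_smul_measure, rp_int]
  simp [Measure.real, div_eq_mul_inv]

lemma integral_avg_zero (Y : Set X) (hY : MeasurableSet Y) (Z : X → UnitAddCircle) (hZ : Measurable Z)
    (U : ℕ → X → X) (hU : ∀ n, MeasurePreserving (U n) μ μ)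
    (hUY : ∀ n, ∀ᵐ x ∂μ, U n x ∈ Y ↔ x ∈ Y)
    (hlim : ∀ᵐ x ∂μ, x ∈ Y → Tendsto (fun N : ℕ => (N : ℂ)⁻¹ * ∑ n ∈ Finset.range N, ee (Z (U n x))) atTop (𝓝 0)) :
    ∫ x in Y, ee (Z x) ∂μ = 0 := by
  have heec : Continuous ee := by
    have := (fourier (T := 1) 1).continuous
    convert this using 1
    ext x
    simp [ee]
  have hm : Measurable (fun x => ee (Z x)) := heec.measurable.comp hZ
  have hintg : ∀ n, Integrable (fun x => ee (Z (U n x))) (μ.restrict Y) := fun n =>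
    Integrable.of_bound (hm.comp (hU n).measurable).aestronglyMeasurable 1
      (Eventually.of_forall fun x => (norm_ee _).le)
  have h1 : ∀ n, ∫ x in Y, ee (Z x) ∂μ = ∫ x in Y, ee (Z (U n x)) ∂μ := by
    intro n
    have := (hU n).map_eq
    conv_lhs => rw [← this]
    rw [setIntegral_map hY hm.aestronglyMeasurable (hU n).measurable.aemeasurable]
    refine setIntegral_congr_set ?_
    filter_upwards [hUY n] with x hx using propext hx
  have h2 : Tendsto (fun N : ℕ => ∫ x in Y, ((N : ℂ)⁻¹ * ∑ n ∈ Finset.range N, ee (Z (U n x))) ∂μ) atTop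
      (𝓝 (∫ x in Y, (0:ℂ) ∂μ)) := by
    refine tendsto_integral_of_dominated_convergence (fun _ => 1) ?_ (integrable_const _) ?_ ?_
    · intro N
      refine Measurable.aestronglyMeasurable ?_
      refine Measurable.const_mul (Finset.measurable_fun_sum _ fun n _ => ?_) _
      exact hm.comp (hU n).measurable
    · intro N
      refine Eventually.of_forall fun x => ?_
      rw [norm_mul, norm_inv, Complex.norm_natCast]
      have : ‖∑ n ∈ Finset.range N, ee (Z (U n x))‖ ≤ N := by
        refine (norm_sum_le _ _).trans ?_
        simp [norm_ee]
      calc _ ≤ (N:ℝ)⁻¹ * N := by gcongr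
        _ ≤ 1 := inv_mul_le_one
    · exact (ae_restrict_iff' hY).2 hlim
  rw [integral_zero] at h2
  refine tendsto_nhds_unique (tendsto_const_nhds.congr' ?_) h2
  filter_upwards [eventually_gt_atTop 0] with N hN
  rw [integral_const_mul, integral_finsetSum _ (fun n _ => hintg n)]
  simp_rw [← h1]
  rw [Finset.sum_const, Finset.card_range, nsmul_eq_mul, ← mul_assoc,
    inv_mul_cancel₀ (by exact_mod_cast hN.ne'), one_mul]

end Equi

section Lam

/-- the subgroup `L ℤ²` -/
def lam (L : ℕ) : AddSubgroup (ℤ × ℤ) :=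
  ((Int.castAddHom (ZMod L)).prodMap (Int.castAddHom (ZMod L))).ker

lemma mem_lam {L : ℕ} {g : ℤ × ℤ} : g ∈ lam L ↔ ∃ g' : ℤ × ℤ, g = (L : ℤ) • g' := by
  rw [lam, AddMonoidHom.mem_ker]
  simp only [AddMonoidHom.prodMap, AddMonoidHom.prod_apply, AddMonoidHom.comp_apply,
    Int.coe_castAddHom, Prod.mk_eq_zero, AddMonoidHom.coe_fst, AddMonoidHom.coe_snd,
    ZMod.intCast_zmod_eq_zero_iff_dvd]
  constructor
  · rintro ⟨⟨a, ha⟩, ⟨b, hb⟩⟩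
    exact ⟨(a, b), Prod.ext (by simpa using ha) (by simpa using hb)⟩
  · rintro ⟨g', rfl⟩
    exact ⟨⟨g'.1, by simp⟩, ⟨g'.2, by simp⟩⟩

lemma lam_fin {L : ℕ} (hL : L ≠ 0) : (lam L).FiniteIndex := by
  have : NeZero L := ⟨hL⟩
  exact AddSubgroup.finiteIndex_ker _

end Lam

section Fin1
set_option linter.unusedSectionVars false
open Filter Topology
variable {X : Type*} [MeasurableSpace X] {μ : Measure X} [IsProbabilityMeasure μ]
    {T : ℤ × ℤ → X → X}
variable (hmp : ∀ g, MeasurePreserving (T g) μ μ) (hT0 : T 0 = id)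
    (hTadd : ∀ g h : ℤ × ℤ, T (g + h) = T g ∘ T h)
    (herg : ∀ S : Set X, MeasurableSet S → (∀ g : ℤ × ℤ, T g ⁻¹' S =ᵐ[μ] S) →
      μ S = 0 ∨ μ S = 1)

lemma stabL_ae {f : Lp ℝ 2 μ} {g : ℤ × ℤ} (h : g ∈ stabL hmp hT0 hTadd f) :
    ∀ᵐ x ∂μ, f (T g x) = f x := by
  have h' := (mem_stabL hmp hT0 hTadd).1 h
  filter_upwards [koop_coe (T g) (hmp g) f] with x hx
  rw [h'] at hx
  exact hx.symm

lemma kproj_01 (S : X → X) (hS : MeasurePreserving S μ μ) {A : Set X} (hA : MeasurableSet A) :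
    ∀ᵐ x ∂μ, 0 ≤ kproj S hS (fA μ hA) x ∧ kproj S hS (fA μ hA) x ≤ 1 := by
  have c1 := fA_coe (μ := μ) hA
  have c2 := fA_coe (μ := μ) (MeasurableSet.univ (α := X))
  have h0 : 0 ≤ fA μ hA := by
    rw [← Lp.coeFn_nonneg]
    filter_upwards [c1] with x hx
    rw [hx]
    exact Set.indicator_nonneg (fun _ _ => zero_le_one) x
  have h1 : fA μ hA ≤ fA μ (MeasurableSet.univ (α := X)) := by
    rw [← Lp.coeFn_le]
    filter_upwards [c1, c2] with x hx hx2
    rw [hx, hx2]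
    exact Set.indicator_le_indicator_of_subset (Set.subset_univ _) (fun _ => zero_le_one) x
  have h2 : kproj S hS (fA μ (MeasurableSet.univ (α := X))) = fA μ MeasurableSet.univ := by
    apply kproj_of_fix
    apply Lp.ext
    filter_upwards [koop_coe S hS (fA μ MeasurableSet.univ), c2, hS.quasiMeasurePreserving.ae c2]
      with x a b c
    rw [a, b, Function.comp, c]; simp
  have h3 := kproj_nonneg S hS h0
  have h4 := kproj_mono S hS h1
  rw [h2] at h4
  rw [← Lp.coeFn_nonneg] at h3
  rw [← Lp.coeFn_le] at h4
  filter_upwards [h3, h4, c2] with x a b c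
  refine ⟨a, b.trans ?_⟩
  rw [c]; simp

include hT0 hTadd in
lemma kdec {ι : Type*} (I : Finset ι) (vec : ι → ℤ × ℤ) (F : ι → Lp ℝ 2 μ)
    (hst : ∀ s ∈ I, vec s ∈ stabL hmp hT0 hTadd (F s)) (s : ι) (hs : s ∈ I) (m K : ℤ)
    (hK : ∀ t ∈ I, t ≠ s → dt (vec s) (vec t) ∣ K) :
    ∃ C : Lp ℝ 2 μ, kproj (T (m • vec s)) (hmp _) (∑ t ∈ I, F t) = F s + C ∧
      ∀ g, (m * K) • g ∈ stabL hmp hT0 hTadd C := by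
  classical
  refine ⟨∑ t ∈ I.erase s, kproj (T (m • vec s)) (hmp _) (F t), ?_, ?_⟩
  · rw [map_sum, ← Finset.add_sum_erase _ _ hs]
    congr 1
    apply kproj_of_fix
    exact (mem_stabL hmp hT0 hTadd).1 (AddSubgroup.zsmul_mem _ (hst s hs) m)
  · intro g
    rw [mem_stabL, map_sum]
    refine Finset.sum_congr rfl fun t ht => ?_
    rw [← mem_stabL hmp hT0 hTadd]
    have hts := Finset.ne_of_mem_erase ht
    have htI := Finset.mem_of_mem_erase ht
    obtain ⟨c, hc⟩ := hK t htI hts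
    have e : (m * K) • g = (c * dt g (vec t)) • (m • vec s) + (m * c * dt (vec s) g) • vec t := by
      rw [hc, show m * (dt (vec s) (vec t) * c) = m * c * dt (vec s) (vec t) by ring, mul_smul,
        dt_smul, smul_add, smul_smul, smul_smul, smul_smul]
      congr 2
      ring
    rw [e]
    refine AddSubgroup.add_mem _ (AddSubgroup.zsmul_mem _ ?_ _) (AddSubgroup.zsmul_mem _ ?_ _)
    · exact kproj_fix _ _ _
    · exact kproj_comm _ _ _ _ (fun f => koop_comm hmp hTadd _ _ f) _ (hst t htI)

/-- the sequence along `w` -/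
noncomputable def wseq (T : ℤ × ℤ → X → X) (φ : X → ℝ) (w : ℤ × ℤ) (x : X) (n : ℤ) : UnitAddCircle :=
  (φ (T (n • w) x) : UnitAddCircle)

include hT0 hTadd in
lemma seqset_stab (φ : X → ℝ) (v w : ℤ × ℤ) (hv : ∀ᵐ x ∂μ, φ (T v x) = φ x)
    (P : (ℤ → UnitAddCircle) → Prop) (hP : ∀ a, P (fun n => a (n + 1)) ↔ P a) (g : ℤ × ℤ) :
    dt v w • g ∈ stabS hmp hT0 hTadd {x | P (wseq T φ w x)} := by
  rw [dt_smul]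
  refine AddSubgroup.add_mem _ (AddSubgroup.zsmul_mem _ ?_ _) (AddSubgroup.zsmul_mem _ ?_ _)
  · rw [mem_stabS]
    filter_upwards [ae_orbit hmp hv] with x hx
    have : wseq T φ w (T v x) = wseq T φ w x := by
      ext n
      have e : T (n • w) (T v x) = T v (T (n • w) x) := by
        have h1 := hTadd (n • w) v
        have h2 := hTadd v (n • w)
        rw [add_comm, h2] at h1
        exact (congrFun h1 x).symm
      simp only [wseq, e, hx]
    simp only [Set.mem_ofPred_eq, this]
  · rw [mem_stabS]
    refine Eventually.of_forall fun x => ?_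
    have : wseq T φ w (T w x) = fun n => wseq T φ w x (n + 1) := by
      ext n
      simp only [wseq]
      rw [add_smul, one_smul, hTadd]; rfl
    simp only [Set.mem_ofPred_eq, this]
    exact hP _

include hmp in
lemma wseq_meas (φ : X → ℝ) (hφ : Measurable φ) (w : ℤ × ℤ) (n : ℤ) :
    Measurable (fun x => wseq T φ w x n) :=
  AddCircle.measurable_mk'.comp (hφ.comp (hmp _).measurable)

lemma sper_shift {G : Type*} (a : ℤ → G) (k : ℤ) :
    (∀ n, a (n + 1 + k) = a (n + 1)) ↔ ∀ n, a (n + k) = a n := by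
  constructor
  · intro h n
    have := h (n - 1)
    simpa using this
  · intro h n; exact h _

lemma sper_iff {G : Type*} (a : ℤ → G) : SPer a ↔ ∃ k : ℕ, 0 < k ∧ ∀ n, a (n + k) = a n := by
  constructor
  · rintro ⟨k, hk, h⟩
    lift k to ℕ using hk.le
    exact ⟨k, by exact_mod_cast hk, h⟩
  · rintro ⟨k, hk, h⟩
    exact ⟨k, by exact_mod_cast hk, h⟩

lemma sper_shift2 {G : Type*} (a : ℤ → G) : SPer (fun n => a (n + 1)) ↔ SPer a := by
  constructor
  · rintro ⟨k, hk, h⟩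
    refine ⟨k, hk, (sper_shift a k).1 fun n => ?_⟩
    rw [add_right_comm]; exact h n
  · rintro ⟨k, hk, h⟩
    refine ⟨k, hk, fun n => ?_⟩
    simp only
    rw [add_right_comm]; exact h _

include hmp in
lemma per_meas (φ : X → ℝ) (hφ : Measurable φ) (w : ℤ × ℤ) (k : ℤ) :
    MeasurableSet {x | ∀ n, wseq T φ w x (n + k) = wseq T φ w x n} := by
  have : {x | ∀ n, wseq T φ w x (n + k) = wseq T φ w x n}
      = ⋂ n, {x | wseq T φ w x (n + k) = wseq T φ w x n} := by ext x; simp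
  rw [this]
  exact MeasurableSet.iInter fun n => measurableSet_eq_fun (wseq_meas hmp φ hφ w _) (wseq_meas hmp φ hφ w _)

include hmp in
lemma sper_meas (φ : X → ℝ) (hφ : Measurable φ) (w : ℤ × ℤ) :
    MeasurableSet {x | SPer (wseq T φ w x)} := by
  have : {x | SPer (wseq T φ w x)} = ⋃ k : ℕ, ⋃ _ : 0 < k,
      {x | ∀ n, wseq T φ w x (n + (k : ℤ)) = wseq T φ w x n} := by
    ext x; simp [sper_iff]
  rw [this]
  exact MeasurableSet.iUnion fun k => MeasurableSet.iUnion fun _ => per_meas hmp φ hφ w k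

include hmp hT0 hTadd herg in
lemma stabilize (φ : X → ℝ) (hφ : Measurable φ) (v w : ℤ × ℤ) (hv : ∀ᵐ x ∂μ, φ (T v x) = φ x)
    (hdt : dt v w ≠ 0) :
    ∃ k : ℕ, 0 < k ∧ ∀ᵐ x ∂μ, SPer (wseq T φ w x) → ∀ n, wseq T φ w x (n + (k : ℤ)) = wseq T φ w x n := by
  set L := (dt v w).natAbs with hL
  have hL0 : L ≠ 0 := Int.natAbs_ne_zero.2 hdt
  have := lam_fin hL0
  set D : ℕ → Set X := fun k => {x | SPer (wseq T φ w x) ∧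
    ¬ ∀ n, wseq T φ w x (n + ((k.factorial : ℕ) : ℤ)) = wseq T φ w x n} with hD
  have hDm : ∀ k, MeasurableSet (D k) := fun k =>
    (sper_meas hmp φ hφ w).inter (per_meas hmp φ hφ w _).compl
  have hanti : Antitone D := by
    intro k l hkl x hx
    refine ⟨hx.1, fun h => hx.2 ?_⟩
    obtain ⟨c, hc⟩ := Nat.factorial_dvd_factorial hkl
    intro n
    rw [hc]; push_cast
    exact per_mul h n c
  have hinter : ⋂ k, D k = ∅ := by
    rw [Set.eq_empty_iff_forall_notMem]
    intro x hx
    have hx' := Set.mem_iInter.1 hx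
    obtain ⟨k, hk, h⟩ := (sper_iff _).1 (hx' 0).1
    refine (hx' k).2 fun n => ?_
    obtain ⟨c, hc⟩ := Nat.dvd_factorial hk le_rfl
    rw [hc]; push_cast
    exact per_mul h n c
  have hlim := tendsto_measure_iInter_atTop (μ := μ) (fun k => (hDm k).nullMeasurableSet) hanti
    ⟨0, measure_ne_top _ _⟩
  rw [hinter, measure_empty] at hlim
  have hlim2 : Tendsto (fun k => ((lam L).index : ENNReal) * μ (D k)) atTop (𝓝 0) := by
    have := ENNReal.Tendsto.const_mul hlim (Or.inr (ENNReal.natCast_ne_top (lam L).index))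
    simpa using this
  obtain ⟨k, hk⟩ := (hlim2.eventually (gt_mem_nhds zero_lt_one)).exists
  have h0 : μ (D k) = 0 := by
    by_contra h
    refine absurd (index_bound hmp hT0 hTadd herg (lam L) (D k) (hDm k) ?_ h) (not_le.2 hk)
    intro g hg
    obtain ⟨g', rfl⟩ := mem_lam.1 hg
    have key : ∀ g, dt v w • g ∈ stabS hmp hT0 hTadd (D k) := seqset_stab hmp hT0 hTadd φ v w hv
      (fun a => SPer a ∧ ¬ ∀ n, a (n + ((k.factorial : ℕ) : ℤ)) = a n) (fun a => by
        rw [sper_shift2]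
        have := sper_shift a ((k.factorial : ℕ) : ℤ)
        simp only [add_right_comm] at this ⊢
        rw [this])
    rcases Int.natAbs_eq (dt v w) with h | h
    · have := key g'
      rwa [h] at this
    · have := key (-g')
      rw [h, neg_smul, smul_neg, neg_neg] at this
      exact this
  refine ⟨k.factorial, Nat.factorial_pos k, ?_⟩
  rw [measure_eq_zero_iff_ae_notMem] at h0
  filter_upwards [h0] with x hx h
  by_contra h2
  exact hx ⟨h, h2⟩

include hT0 hTadd in
lemma image_of_pre (g : ℤ × ℤ) (B : Set X) (h : g ∈ stabS hmp hT0 hTadd B) :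
    T g '' B =ᵐ[μ] B := by
  have h' := (mem_stabS hmp hT0 hTadd).1 (AddSubgroup.neg_mem _ h)
  have e : ∀ g x, T g (T (-g) x) = x := fun g x => by
    have := hTadd g (-g)
    rw [add_neg_cancel, hT0] at this
    exact (congrFun this x).symm
  have : T g '' B = T (-g) ⁻¹' B := by
    ext x
    constructor
    · rintro ⟨y, hy, rfl⟩
      have := e (-g) y
      rw [neg_neg] at this
      change T (-g) (T g y) ∈ B
      rwa [this]
    · intro hx
      exact ⟨_, hx, e g x⟩
  rw [this]
  exact ae_iff_setEq.2 h'

include hT0 hTadd in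
lemma case_half {A : Set X} (hA : MeasurableSet A) {Y : Set X} (hYm : MeasurableSet Y) (L : ℕ) (hL : L ≠ 0)
    (hY : lam L ≤ stabS hmp hT0 hTadd Y) (F C : Lp ℝ 2 μ) (v w : ℤ × ℤ) (K : ℤ)
    (hdec : kproj (T ((L : ℤ) • v)) (hmp _) (fA μ hA) = F + C)
    (hC : ∀ g, ((L : ℤ) * K) • g ∈ stabL hmp hT0 hTadd C) (hw : ∃ p, w = K • p) (m : ℕ)
    (hpoly : ∀ᵐ x ∂μ, SPoly m (wseq T F w x))
    (hnp : ∀ᵐ x ∂μ, x ∈ Y → ¬ SPer (wseq T F w x)) : μ (Y ∩ A) = μ Y / 2 := by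
  obtain ⟨p, hp⟩ := hw
  set Q : Lp ℝ 2 μ := kproj (T ((L : ℤ) • v)) (hmp _) (fA μ hA) with hQ
  have hQ01 := kproj_01 (T ((L : ℤ) • v)) (hmp _) hA
  have hQm : Measurable (Q : X → ℝ) := (Lp.stronglyMeasurable Q).measurable
  have hQFC : ∀ᵐ x ∂μ, Q x = F x + C x := by
    rw [hdec]; exact Lp.coeFn_add F C
  have hCinv : ∀ᵐ x ∂μ, ∀ n : ℕ, C (T (((L : ℤ) * n) • w) x) = C x := by
    refine ae_all_iff.2 fun n => stabL_ae hmp hT0 hTadd ?_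
    have := hC ((n : ℤ) • p)
    rw [hp, smul_smul]
    rw [smul_smul] at this
    convert this using 2
    ring
  have hintg := half_of_fourier (μ := μ) Y Q hQm hQ01 (fun j hj => by
    refine integral_avg_zero Y hYm (fun x => j • (Q x : UnitAddCircle))
      ((measurable_const_smul j).comp (AddCircle.measurable_mk'.comp hQm))
      (fun n => T (((L : ℤ) * n) • w)) (fun n => hmp _) (fun n => ?_) ?_
    · refine (mem_stabS hmp hT0 hTadd).1 (hY (mem_lam.2 ⟨(n : ℤ) • w, ?_⟩))
      rw [smul_smul]
    · filter_upwards [ae_orbit hmp hQFC, hCinv, hpoly, hnp] with x h1 h2 h3 h4 hx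
      have hp' := weyl (spoly_scale j (L : ℤ) h3)
        (fun h => h4 hx (per_scale h3 hj (by exact_mod_cast hL) h))
      have := hp'.const_mul (ee (j • (C x : UnitAddCircle)))
      rw [mul_zero] at this
      refine this.congr fun N => ?_
      rw [mul_left_comm, Finset.mul_sum]
      congr 1
      refine Finset.sum_congr rfl fun n _ => ?_
      rw [h1, h2, AddCircle.coe_add, smul_add, ee_add, mul_comm]
      rfl)
  have hf : ∫ x in Y, Q x ∂μ = μ.real (Y ∩ A) := by
    rw [hQ, kproj_setIntegral _ _ _ _ hYm (ae_iff_setEq.2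
      ((mem_stabS hmp hT0 hTadd).1 (hY (mem_lam.2 ⟨v, rfl⟩))))]
    rw [integral_congr_ae (ae_restrict_of_ae (fA_coe hA)), integral_indicator_one hA]
    simp [Measure.real, Measure.restrict_apply hA, Set.inter_comm]
  rw [hf] at hintg
  simp only [Measure.real] at hintg
  have := congrArg ENNReal.ofReal hintg
  rw [ENNReal.ofReal_toReal (measure_ne_top _ _), ENNReal.ofReal_div_of_pos two_pos,
    ENNReal.ofReal_toReal (measure_ne_top _ _)] at this
  simpa using this

end Fin1

section Fin2
set_option linter.unusedSectionVars false
open Filter Topology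

lemma coe_zero_01 {y : ℝ} (h0 : 0 ≤ y) (h1 : y ≤ 1) (h : (y : UnitAddCircle) = 0) : y = 0 ∨ y = 1 := by
  rcases h1.lt_or_eq with h2 | h2
  · left
    have := rp_coe h0 h2
    rw [h] at this
    rw [← this]
    have := rp_coe (x := 0) le_rfl zero_lt_one
    simpa using this
  · exact Or.inr h2

lemma coe_ne_zero_rp {y : ℝ} {e : UnitAddCircle} (h0 : 0 ≤ y) (h1 : y ≤ 1) (he : e ≠ 0)
    (h : (y : UnitAddCircle) = e) : y = rp e := by
  rw [← h, rp_coe h0]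
  refine lt_of_le_of_ne h1 fun h2 => he ?_
  rw [← h, h2]
  exact AddCircle.coe_period 1

variable {X : Type*} [MeasurableSpace X] {μ : Measure X} [IsProbabilityMeasure μ]
    {T : ℤ × ℤ → X → X}
variable (hmp : ∀ g, MeasurePreserving (T g) μ μ) (hT0 : T 0 = id)
    (hTadd : ∀ g h : ℤ × ℤ, T (g + h) = T g ∘ T h)
    (herg : ∀ S : Set X, MeasurableSet S → (∀ g : ℤ × ℤ, T g ⁻¹' S =ᵐ[μ] S) →
      μ S = 0 ∨ μ S = 1)

lemma proj_extreme (S : X → X) (hS : MeasurePreserving S μ μ) {A : Set X} (hA : MeasurableSet A) :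
    ∀ᵐ x ∂μ, (kproj S hS (fA μ hA) x = 0 → x ∉ A) ∧ (kproj S hS (fA μ hA) x = 1 → x ∈ A) := by
  set Q := kproj S hS (fA μ hA) with hQ
  have hQm : Measurable (Q : X → ℝ) := (Lp.stronglyMeasurable Q).measurable
  have hfix : ∀ᵐ x ∂μ, Q (S x) = Q x := by
    filter_upwards [koop_coe S hS Q] with x hx
    rw [hQ, kproj_fix, ← hQ] at hx
    exact hx.symm
  have hE : ∀ c : ℝ, MeasurableSet {x | Q x = c} := fun c => hQm (measurableSet_singleton c)
  have hintg : ∀ c : ℝ, ∫ x in {x | Q x = c}, Q x ∂μ = μ.real ({x | Q x = c} ∩ A) := by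
    intro c
    rw [hQ, kproj_setIntegral S hS _ _ (hE c) (by
      filter_upwards [hfix] with x hx
      change (Q (S x) = c) = (Q x = c)
      rw [hx])]
    rw [integral_congr_ae (ae_restrict_of_ae (fA_coe hA)), integral_indicator_one hA]
    simp [Measure.real, Measure.restrict_apply hA, Set.inter_comm]
    rfl
  have hintg2 : ∀ c : ℝ, ∫ x in {x | Q x = c}, Q x ∂μ = μ.real {x | Q x = c} * c := by
    intro c
    rw [setIntegral_congr_fun (g := fun _ => c) (hE c) (fun x hx => hx)]
    simp
  have z0 : μ ({x | Q x = 0} ∩ A) = 0 := by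
    have := (hintg 0).symm.trans (hintg2 0)
    rw [mul_zero] at this
    exact (measureReal_eq_zero_iff (measure_ne_top _ _)).1 this
  have z1 : μ ({x | Q x = 1} \ A) = 0 := by
    have := (hintg 1).symm.trans (hintg2 1)
    have h2 := measureReal_inter_add_sdiff (μ := μ) (s := {x | Q x = 1}) hA
    rw [this, mul_one] at h2
    have h3 : μ.real ({x | Q x = 1} \ A) = 0 := by linarith
    exact (measureReal_eq_zero_iff (measure_ne_top _ _)).1 h3
  rw [measure_eq_zero_iff_ae_notMem] at z0 z1
  filter_upwards [z0, z1] with x h1 h2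
  refine ⟨fun h h' => h1 ⟨h, h'⟩, fun h => ?_⟩
  by_contra h'
  exact h2 ⟨h, h'⟩

include hT0 hTadd in
lemma case_per {ι : Type*} {A : Set X} (hA : MeasurableSet A) {Y : Set X} (L : ℕ) (hL : L ≠ 0)
    (hY : IsComp hmp hT0 hTadd (lam L) Y) (I : Finset ι) (vec : ι → ℤ × ℤ) (F C : ι → Lp ℝ 2 μ)
    (K : ℤ) (hKL : K ∣ L) (hvec : ∀ s ∈ I, vec s ≠ 0)
    (hsum : fA μ hA = ∑ s ∈ I, F s)
    (hdec : ∀ s ∈ I, kproj (T ((1 : ℤ) • vec s)) (hmp _) (fA μ hA) = F s + C s)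
    (hC : ∀ s ∈ I, ∀ g, ((1 : ℤ) * K) • g ∈ stabL hmp hT0 hTadd (C s))
    (hmod : ∀ s ∈ I, ∀ g ∈ lam L, ∀ᵐ x ∂μ, x ∈ Y →
      (F s (T g x) : UnitAddCircle) = (F s x : UnitAddCircle)) :
    ∃ g : ℤ × ℤ, g ≠ 0 ∧ g ∈ stabS hmp hT0 hTadd (Y ∩ A) := by
  have hLz : (L : ℤ) ≠ 0 := by exact_mod_cast hL
  have finish : ∀ g ∈ lam L, (∀ᵐ x ∂μ, x ∈ Y → T g x ∈ Y → (T g x ∈ A ↔ x ∈ A)) →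
      g ∈ stabS hmp hT0 hTadd (Y ∩ A) := by
    intro g hg h
    rw [mem_stabS]
    filter_upwards [h, (mem_stabS hmp hT0 hTadd).1 (hY.2.1 hg)] with x h1 h2
    simp only [Set.mem_inter_iff, h2]
    constructor
    · rintro ⟨a, b⟩; exact ⟨a, (h1 a (h2.2 a)).1 b⟩
    · rintro ⟨a, b⟩; exact ⟨a, (h1 a (h2.2 a)).2 b⟩
  have hCc : ∀ s ∈ I, ∃ d : ℝ, ∀ᵐ x ∂μ, x ∈ Y → C s x = d := by
    intro s hs
    refine ae_const hmp hT0 hTadd hY _ (Lp.stronglyMeasurable (C s)).measurable fun g hg => ?_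
    obtain ⟨g', rfl⟩ := mem_lam.1 hg
    obtain ⟨c, hc⟩ := hKL
    have h1 := hC s hs (c • g')
    rw [one_mul, smul_smul, ← hc] at h1
    filter_upwards [stabL_ae hmp hT0 hTadd h1] with x hx _ using hx
  have hFc : ∀ s ∈ I, ∃ c : UnitAddCircle, ∀ᵐ x ∂μ, x ∈ Y → (F s x : UnitAddCircle) = c := by
    intro s hs
    exact ae_const hmp hT0 hTadd hY (fun x => (F s x : UnitAddCircle))
      (AddCircle.measurable_mk'.comp (Lp.stronglyMeasurable (F s)).measurable) (hmod s hs)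
  have hQFC : ∀ s ∈ I, ∀ᵐ x ∂μ, kproj (T ((1 : ℤ) • vec s)) (hmp _) (fA μ hA) x = F s x + C s x := by
    intro s hs
    rw [hdec s hs]; exact Lp.coeFn_add _ _
  by_cases hex : ∃ s ∈ I, ∀ᵐ x ∂μ, x ∈ Y → kproj (T ((1 : ℤ) • vec s)) (hmp _) (fA μ hA) x = 0 ∨
      kproj (T ((1 : ℤ) • vec s)) (hmp _) (fA μ hA) x = 1
  · obtain ⟨s, hs, h⟩ := hex
    refine ⟨(L : ℤ) • vec s, smul_ne_zero hLz (hvec s hs), finish _ (mem_lam.2 ⟨_, rfl⟩) ?_⟩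
    set Q := kproj (T ((1 : ℤ) • vec s)) (hmp _) (fA μ hA) with hQ
    have hst : (L : ℤ) • vec s ∈ stabL hmp hT0 hTadd Q := by
      have h1 : (1 : ℤ) • vec s ∈ stabL hmp hT0 hTadd Q := kproj_fix _ _ _
      rw [one_smul] at h1
      exact AddSubgroup.zsmul_mem _ h1 _
    have hext := proj_extreme (T ((1 : ℤ) • vec s)) (hmp _) hA
    rw [← hQ] at hext
    filter_upwards [h, hext, (hmp ((L : ℤ) • vec s)).quasiMeasurePreserving.ae hext,
      stabL_ae hmp hT0 hTadd hst] with x h1 h2 h3 h4 hx _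
    rw [h4] at h3
    rcases h1 hx with h5 | h5
    · exact iff_of_false (h3.1 h5) (h2.1 h5)
    · exact iff_of_true (h3.2 h5) (h2.2 h5)
  · have hex2 : ∀ s ∈ I, ¬ ∀ᵐ x ∂μ, x ∈ Y →
        kproj (T ((1 : ℤ) • vec s)) (hmp _) (fA μ hA) x = 0 ∨
        kproj (T ((1 : ℤ) • vec s)) (hmp _) (fA μ hA) x = 1 := fun s hs h => hex ⟨s, hs, h⟩
    have hFcc : ∀ s ∈ I, ∃ c : ℝ, ∀ᵐ x ∂μ, x ∈ Y → F s x = c := by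
      intro s hs
      obtain ⟨c, hc⟩ := hFc s hs
      obtain ⟨d, hd⟩ := hCc s hs
      by_cases he : c + (d : UnitAddCircle) = 0
      · refine absurd ?_ (hex2 s hs)
        filter_upwards [hc, hd, hQFC s hs, kproj_01 (T ((1 : ℤ) • vec s)) (hmp _) hA] with x h1 h2 h3 h4 hx
        refine coe_zero_01 h4.1 h4.2 ?_
        rw [h3, AddCircle.coe_add, h1 hx, h2 hx, he]
      · refine ⟨rp (c + (d : UnitAddCircle)) - d, ?_⟩
        filter_upwards [hc, hd, hQFC s hs, kproj_01 (T ((1 : ℤ) • vec s)) (hmp _) hA] with x h1 h2 h3 h4 hx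
        have := coe_ne_zero_rp h4.1 h4.2 he (by rw [h3, AddCircle.coe_add, h1 hx, h2 hx])
        rw [← this, h3, h2 hx]; ring
    have hAc : ∃ c : ℝ, ∀ᵐ x ∂μ, x ∈ Y → A.indicator (1 : X → ℝ) x = c := by
      have : ∀ s, ∃ c : ℝ, s ∈ I → ∀ᵐ x ∂μ, x ∈ Y → F s x = c := by
        intro s
        by_cases hs : s ∈ I
        · obtain ⟨c, hc⟩ := hFcc s hs
          exact ⟨c, fun _ => hc⟩
        · exact ⟨0, fun h => absurd h hs⟩
      choose c hc using this
      refine ⟨∑ s ∈ I, c s, ?_⟩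
      have h1 : ∀ᵐ x ∂μ, ∀ s ∈ I, x ∈ Y → F s x = c s := (Filter.eventually_all_finset I).2 hc
      have h2 := fA_coe (μ := μ) hA
      rw [hsum] at h2
      filter_upwards [h1, h2, lp_coe_sum I F] with x a1 a2 a3 hx
      rw [← a2, a3]
      exact Finset.sum_congr rfl fun s hs => a1 s hs hx
    obtain ⟨c, hc⟩ := hAc
    refine ⟨(L : ℤ) • (1, 0), smul_ne_zero hLz (by simp), finish _ (mem_lam.2 ⟨_, rfl⟩) ?_⟩
    filter_upwards [hc, (hmp ((L : ℤ) • (1, 0))).quasiMeasurePreserving.ae hc] with x h1 h2 hx hx2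
    have h3 := (h1 hx).trans (h2 hx2).symm
    by_cases a : x ∈ A
    · by_cases b : T ((L : ℤ) • (1, 0)) x ∈ A
      · exact iff_of_true b a
      · rw [Set.indicator_of_mem a, Set.indicator_of_notMem b] at h3
        exact absurd h3 one_ne_zero
    · by_cases b : T ((L : ℤ) • (1, 0)) x ∈ A
      · rw [Set.indicator_of_notMem a, Set.indicator_of_mem b] at h3
        exact absurd h3.symm one_ne_zero
      · exact iff_of_false b a

include hT0 hTadd in
lemma poly_ae {ι : Type*} {A : Set X} (hA : MeasurableSet A) (I : Finset ι) (vec : ι → ℤ × ℤ)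
    (F : ι → Lp ℝ 2 μ) (hst : ∀ s ∈ I, vec s ∈ stabL hmp hT0 hTadd (F s))
    (hsum : fA μ hA = ∑ s ∈ I, F s) (s : ι) (hs : s ∈ I) (K : ℤ)
    (hK : ∀ t ∈ I, t ≠ s → dt (vec s) (vec t) ∣ K) (w : ℤ × ℤ) (hw : ∃ p, w = K • p) :
    ∃ m, ∀ᵐ x ∂μ, SPoly m (wseq T (F s) w x) := by
  classical
  obtain ⟨p, hp⟩ := hw
  refine ⟨(I.erase s).card, ?_⟩
  have h1 : ∀ᵐ x ∂μ, ∀ t ∈ I, F t (T (vec t) x) = F t x :=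
    (Filter.eventually_all_finset I).2 fun t ht => stabL_ae hmp hT0 hTadd (hst t ht)
  have h2 := fA_coe (μ := μ) hA
  rw [hsum] at h2
  filter_upwards [ae_orbit hmp h1, ae_orbit hmp h2, ae_orbit hmp (lp_coe_sum I F)] with x a1 a2 a3
  have hinv : ∀ t ∈ I, ∀ g, F t (T (g + vec t) x) = F t (T g x) := by
    intro t ht g
    rw [add_comm, hTadd]; exact a1 g t ht
  have := poly_seq (I.erase s) (fun g => (F s (T g x) : UnitAddCircle))
    (fun t g => -(F t (T g x) : UnitAddCircle)) (vec s) w vec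
    (fun g => by rw [hinv s hs])
    (fun t ht g => by rw [hinv t (Finset.mem_of_mem_erase ht)])
    (fun t ht => by
      obtain ⟨c, hc⟩ := hK t (Finset.mem_of_mem_erase ht) (Finset.ne_of_mem_erase ht)
      refine ⟨c * dt p (vec t), c * dt (vec s) p, ?_⟩
      rw [hp, hc, mul_comm, mul_smul, dt_smul, smul_add, smul_smul, smul_smul])
    (fun g => by
      rw [Finset.sum_neg_distrib, eq_neg_iff_add_eq_zero,
        Finset.add_sum_erase I (fun t => (F t (T g x) : UnitAddCircle)) hs]
      have e : ((∑ t ∈ I, F t (T g x) : ℝ) : UnitAddCircle) = ∑ t ∈ I, (F t (T g x) : UnitAddCircle) :=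
        map_sum (QuotientAddGroup.mk' (AddSubgroup.zmultiples (1:ℝ))) _ _
      rw [← e, ← a3 g, a2 g]
      by_cases h : T g x ∈ A
      · rw [Set.indicator_of_mem h]; exact AddCircle.coe_period 1
      · rw [Set.indicator_of_notMem h]; rfl) 0
  simp only [zero_add] at this
  exact this

include hT0 hTadd in
lemma mod_inv {Y : Set X} (F : Lp ℝ 2 μ) (v w : ℤ × ℤ) (hst : v ∈ stabL hmp hT0 hTadd F) (k L : ℕ)
    (hL : dt v w * k ∣ L)
    (hper : ∀ᵐ x ∂μ, x ∈ Y → ∀ n, wseq T F w x (n + (k : ℤ)) = wseq T F w x n) :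
    ∀ g ∈ lam L, ∀ᵐ x ∂μ, x ∈ Y → (F (T g x) : UnitAddCircle) = (F x : UnitAddCircle) := by
  intro g hg
  obtain ⟨g', rfl⟩ := mem_lam.1 hg
  obtain ⟨c, hc⟩ := hL
  have e : (L : ℤ) • g' = (k * c * dt g' w) • v + ((k * (c * dt v g')) • w) := by
    rw [hc, show dt v w * k * c = k * c * dt v w by ring, mul_smul, dt_smul, smul_add, smul_smul,
      smul_smul, mul_assoc, mul_assoc]
  filter_upwards [ae_orbit hmp (stabL_ae hmp hT0 hTadd hst), hper] with x h1 h2 hx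
  have h3 := inv_zsmul (α := fun g => F (T g x)) (v := v) (fun g => by
    rw [add_comm, hTadd]; exact h1 g) (k * c * dt g' w) ((k * (c * dt v g')) • w)
  have h4 := per_mul (h2 hx) 0 (c * dt v g')
  simp only [wseq, zero_add, zero_smul, hT0, id] at h4
  rw [e, add_comm, ← h4]
  exact congrArg _ h3

end Fin2

/-- **Theorem 4.4.** Let `(X, μ)` be a probability space with an ergodic
measure-preserving `ℤ²`-action `T`, and let `A ⊆ X` be measurable with
`Ann(1_A) ≠ {0}`. Then there is a finite index subgroup `Λ ⊆ ℤ²` such that for each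
`Λ`-ergodic component `X_s`, either `X_s ∩ A` is 1-periodic (invariant up to null sets
under some nonzero element of `ℤ²`) or `μ(X_s ∩ A) = μ(X_s)/2`. -/
theorem onePeriodic_or_half_measure_on_components
    {X : Type*} [MeasurableSpace X] (μ : Measure X) [IsProbabilityMeasure μ]
    (T : ℤ × ℤ → X → X)
    (hmp : ∀ g, MeasurePreserving (T g) μ μ)
    (hT0 : T 0 = id)
    (hTadd : ∀ g h : ℤ × ℤ, T (g + h) = T g ∘ T h)
    (herg : ∀ S : Set X, MeasurableSet S → (∀ g : ℤ × ℤ, T g ⁻¹' S =ᵐ[μ] S) →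
      μ S = 0 ∨ μ S = 1)
    (A : Set X) (hA : MeasurableSet A)
    (hann : ∃ p : AddMonoidAlgebra ℤ (ℤ × ℤ), p ≠ 0 ∧
      polyAct T p (A.indicator 1) =ᵐ[μ] (fun _ => (0 : ℝ))) :
    ∃ Λ : AddSubgroup (ℤ × ℤ), Λ.FiniteIndex ∧
      ∃ (n : ℕ) (Xs : Fin n → Set X),
        IsErgodicComponents μ T Λ Xs ∧
        ∀ i, (∃ g : ℤ × ℤ, g ≠ 0 ∧ T g '' (Xs i ∩ A) =ᵐ[μ] ((Xs i ∩ A : Set X))) ∨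
          μ (Xs i ∩ A) = μ (Xs i) / 2 := by
  classical
  obtain ⟨p, hp, hpA⟩ := hann
  obtain ⟨I, vec, F, hvec, hst, hind, hsum⟩ := struct2 hmp hT0 hTadd hA p hp hpA
  obtain ⟨K, hK0, hK⟩ : ∃ K : ℤ, K ≠ 0 ∧ ∀ s ∈ I, ∀ t ∈ I, t ≠ s → dt (vec s) (vec t) ∣ K := by
    refine ⟨∏ s ∈ I, ∏ t ∈ I.erase s, dt (vec s) (vec t), ?_, ?_⟩
    · refine Finset.prod_ne_zero_iff.2 fun s hs => Finset.prod_ne_zero_iff.2 fun t ht => ?_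
      exact hind s hs t (Finset.mem_of_mem_erase ht) (Finset.ne_of_mem_erase ht).symm
    · intro s hs t ht hts
      exact (Finset.dvd_prod_of_mem (fun t => dt (vec s) (vec t))
        (Finset.mem_erase.2 ⟨hts, ht⟩)).trans
        (Finset.dvd_prod_of_mem (fun s => ∏ t ∈ I.erase s, dt (vec s) (vec t)) hs)
  obtain ⟨w, hwK, hw⟩ : ∃ w : ℚ × Prop → ℤ × ℤ, (∀ s, ∃ q, w s = K • q) ∧
      ∀ s ∈ I, dt (vec s) (w s) ≠ 0 := by
    refine ⟨fun s => K • (-(vec s).2, (vec s).1), fun s => ⟨_, rfl⟩, fun s hs h => hvec s hs ?_⟩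
    have h1 : K * ((vec s).1 * (vec s).1 + (vec s).2 * (vec s).2) = 0 := by
      rw [← h]; simp [dt]; ring
    have h2 := (mul_eq_zero.1 h1).resolve_left hK0
    have h3 : (vec s).1 = 0 := by nlinarith [mul_self_nonneg (vec s).1, mul_self_nonneg (vec s).2]
    have h4 : (vec s).2 = 0 := by nlinarith [mul_self_nonneg (vec s).1, mul_self_nonneg (vec s).2]
    exact Prod.ext h3 h4
  have hFm : ∀ s, Measurable (F s : X → ℝ) := fun s => (Lp.stronglyMeasurable (F s)).measurable
  have hkex : ∀ s, ∃ k : ℕ, 0 < k ∧ (s ∈ I → ∀ᵐ x ∂μ, SPer (wseq T (F s) (w s) x) →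
      ∀ n, wseq T (F s) (w s) x (n + (k : ℤ)) = wseq T (F s) (w s) x n) := by
    intro s
    by_cases hs : s ∈ I
    · obtain ⟨k, hk, h⟩ := stabilize hmp hT0 hTadd herg (F s) (hFm s) (vec s) (w s)
        (stabL_ae hmp hT0 hTadd (hst s hs)) (hw s hs)
      exact ⟨k, hk, fun _ => h⟩
    · exact ⟨1, one_pos, fun h => absurd h hs⟩
  choose k hk0 hk using hkex
  obtain ⟨L, hL0, hKL, hL⟩ : ∃ L : ℕ, L ≠ 0 ∧ K ∣ (L : ℤ) ∧
      ∀ s ∈ I, dt (vec s) (w s) * k s ∣ (L : ℤ) := by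
    refine ⟨(K * ∏ s ∈ I, (dt (vec s) (w s) * k s)).natAbs, ?_, ?_, ?_⟩
    · refine Int.natAbs_ne_zero.2 (mul_ne_zero hK0 (Finset.prod_ne_zero_iff.2 fun s hs => ?_))
      exact mul_ne_zero (hw s hs) (by exact_mod_cast (hk0 s).ne')
    · exact Int.dvd_natAbs.2 (dvd_mul_right _ _)
    · intro s hs
      exact Int.dvd_natAbs.2 (dvd_mul_of_dvd_right
        (Finset.dvd_prod_of_mem (fun s => dt (vec s) (w s) * (k s : ℤ)) hs) _)
  have hfin := lam_fin hL0
  obtain ⟨n, Xs, hc, hpos, hdis, hcov⟩ := comps hmp hT0 hTadd herg (lam L)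
  refine ⟨lam L, hfin, n, Xs, ⟨fun i => (hc i).1, fun i => pos_iff_ne_zero.2 (hpos i), ?_, hcov, ?_, ?_⟩, ?_⟩
  · intro i j hij
    rw [(hdis i j hij).inter_eq, measure_empty]
  · intro i g hg
    exact ae_iff_setEq.2 ((mem_stabS hmp hT0 hTadd).1 ((hc i).2.1 hg))
  · intro i S hS h
    exact (hc i).2.2 S hS fun g hg => (mem_stabS hmp hT0 hTadd).2 (ae_iff_setEq.1 (h g hg))
  intro i
  have hdich : ∀ s ∈ I, μ (Xs i ∩ {x | SPer (wseq T (F s) (w s) x)}) = 0 ∨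
      μ (Xs i \ {x | SPer (wseq T (F s) (w s) x)}) = 0 := by
    intro s hs
    refine (hc i).2.2 _ (sper_meas hmp (F s) (hFm s) (w s)) fun g hg => ?_
    obtain ⟨g', rfl⟩ := mem_lam.1 hg
    obtain ⟨c, hcc⟩ := hL s hs
    have := seqset_stab hmp hT0 hTadd (F s) (vec s) (w s) (stabL_ae hmp hT0 hTadd (hst s hs))
      SPer sper_shift2 (((k s : ℤ) * c) • g')
    rw [smul_smul, ← mul_assoc, ← hcc] at this
    exact this
  by_cases hex : ∃ s ∈ I, μ (Xs i ∩ {x | SPer (wseq T (F s) (w s) x)}) = 0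
  · right
    obtain ⟨s, hs, h0⟩ := hex
    obtain ⟨C, hC1, hC2⟩ := kdec hmp hT0 hTadd I vec F hst s hs (L : ℤ) K (hK s hs)
    rw [← hsum] at hC1
    obtain ⟨m, hm⟩ := poly_ae hmp hT0 hTadd hA I vec F hst hsum s hs K (hK s hs) (w s) (hwK s)
    refine case_half hmp hT0 hTadd hA (hc i).1 L hL0 (hc i).2.1 (F s) C (vec s) (w s) K hC1 hC2
      (hwK s) m hm ?_
    rw [measure_eq_zero_iff_ae_notMem] at h0
    filter_upwards [h0] with x hx hxY hS using hx ⟨hxY, hS⟩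
  · left
    have hCex : ∀ s, ∃ C : Lp ℝ 2 μ, s ∈ I →
        kproj (T ((1 : ℤ) • vec s)) (hmp _) (fA μ hA) = F s + C ∧
        ∀ g, ((1 : ℤ) * K) • g ∈ stabL hmp hT0 hTadd C := by
      intro s
      by_cases hs : s ∈ I
      · obtain ⟨C, hC1, hC2⟩ := kdec hmp hT0 hTadd I vec F hst s hs 1 K (hK s hs)
        rw [← hsum] at hC1
        exact ⟨C, fun _ => ⟨hC1, hC2⟩⟩
      · exact ⟨0, fun h => absurd h hs⟩
    choose C hC using hCex
    obtain ⟨g, hg0, hg⟩ := case_per hmp hT0 hTadd hA L hL0 (hc i) I vec F C K hKL hvec hsum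
      (fun s hs => (hC s hs).1) (fun s hs => (hC s hs).2) (fun s hs => by
        refine mod_inv hmp hT0 hTadd (F s) (vec s) (w s) (hst s hs) (k s) L (hL s hs) ?_
        have h0 := (hdich s hs).resolve_left fun h => hex ⟨s, hs, h⟩
        rw [measure_eq_zero_iff_ae_notMem] at h0
        filter_upwards [h0, hk s hs] with x hx h2 hxY
        refine h2 ?_
        by_contra hS
        exact hx ⟨hxY, hS⟩)
    exact ⟨g, hg0, image_of_pre hmp hT0 hTadd g _ hg⟩
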